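/- Let D be a bounded domain in ℂ. Then D is an L²_h-domain of holomorphy if and only if for every w ∈ ∂D and every neighborhood U of w the set U \ D is not polar. -/

import Mathlib

open MeasureTheory Filter Topology Metric Set
open scoped ENNReal NNReal

/-- Truncated circle average of an `EReal`-valued function: the average over the circle of
center `c` and radius `R` of the function truncated below at `-n`. -/
noncomputable def circleAvgTrunc (u : ℂ → EReal) (c : ℂ) (R : ℝ) (n : ℕ) : ℝ :=
  (2 * Real.pi)⁻¹ * ∫ θ in (0:ℝ)..(2 * Real.pi),
    (max (u (c + R * Complex.exp (θ * Complex.I))) (-(n : ℝ) : EReal)).toReal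

/-- `u` is subharmonic on `Ω ⊆ ℂ`: values in `[-∞, ∞)`, upper semicontinuous on `Ω`, and for
every closed disc contained in `Ω` the value at the center is at most the mean over the
boundary circle (in the extended sense, via decreasing truncations). -/
def SubharmonicOn (u : ℂ → EReal) (Ω : Set ℂ) : Prop :=
  UpperSemicontinuousOn u Ω ∧ (∀ z ∈ Ω, u z < ⊤) ∧
    ∀ c ∈ Ω, ∀ R : ℝ, 0 < R → Metric.closedBall c R ⊆ Ω →
      u c ≤ ⨅ n : ℕ, (circleAvgTrunc u c R n : EReal)

/-- `u` is plurisubharmonic on `Ω`: values in `[-∞, ∞)`, upper semicontinuous on `Ω`, and its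
restriction to every complex line is subharmonic. -/
def PlurisubharmonicOn {E : Type*} [NormedAddCommGroup E] [NormedSpace ℂ E]
    (u : E → EReal) (Ω : Set E) : Prop :=
  UpperSemicontinuousOn u Ω ∧ (∀ z ∈ Ω, u z < ⊤) ∧
    ∀ a b : E, SubharmonicOn (fun lam : ℂ => u (a + lam • b)) {lam : ℂ | a + lam • b ∈ Ω}

/-- A set `P ⊆ ℂ` is polar. -/
def PolarSet (P : Set ℂ) : Prop :=
  ∀ z ∈ P, ∃ U : Set ℂ, IsOpen U ∧ IsConnected U ∧ z ∈ U ∧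
    ∃ u : ℂ → EReal, SubharmonicOn u U ∧ (∃ x ∈ U, u x ≠ ⊥) ∧ ∀ x ∈ P ∩ U, u x = ⊥

/-- A set `P ⊆ ℂⁿ` is pluripolar. -/
def PluripolarSet {E : Type*} [NormedAddCommGroup E] [NormedSpace ℂ E] (P : Set E) : Prop :=
  ∀ z ∈ P, ∃ U : Set E, IsOpen U ∧ IsConnected U ∧ z ∈ U ∧
    ∃ u : E → EReal, PlurisubharmonicOn u U ∧ (∃ x ∈ U, u x ≠ ⊥) ∧ ∀ x ∈ P ∩ U, u x = ⊥

/-- A domain `D` is pseudoconvex if `z ↦ -log dist(z, ∂D)` is plurisubharmonic on `D`. -/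
def IsPseudoconvex {E : Type*} [NormedAddCommGroup E] [NormedSpace ℂ E] (D : Set E) : Prop :=
  PlurisubharmonicOn (fun z => ((- Real.log (Metric.infDist z Dᶜ) : ℝ) : EReal)) D

/-- The square-integrable holomorphic functions on an open set `Ω`. -/
def L2h {E : Type*} [NormedAddCommGroup E] [NormedSpace ℂ E] [MeasureSpace E]
    (Ω : Set E) : Set (E → ℂ) :=
  {f | DifferentiableOn ℂ f Ω ∧ (∫⁻ z in Ω, (‖f z‖₊ : ℝ≥0∞) ^ 2) < ⊤}

/-- The Bergman kernel of `Ω` on the diagonal,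
`K_Ω(z) = sup { |f(z)|²/‖f‖²_{L²(Ω)} : f ∈ L²ₕ(Ω), f ≢ 0 }`. -/
noncomputable def bergmanKernel {E : Type*} [NormedAddCommGroup E] [NormedSpace ℂ E]
    [MeasureSpace E] (Ω : Set E) (z : E) : ℝ≥0∞ :=
  ⨆ (f : E → ℂ) (_ : f ∈ L2h Ω) (_ : ∃ w ∈ Ω, f w ≠ 0),
    (‖f z‖₊ : ℝ≥0∞) ^ 2 / ∫⁻ w in Ω, (‖f w‖₊ : ℝ≥0∞) ^ 2

/-- `D` is an `L²ₕ`-domain of holomorphy: there are no domains `D₀, D₁` with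
`∅ ≠ D₀ ⊆ D₁ ∩ D`, `D₁ ⊄ D`, such that every `f ∈ L²ₕ(D)` extends holomorphically to `D₁`
(agreeing with `f` on `D₀`). -/
def IsL2hDomainOfHolomorphy {E : Type*} [NormedAddCommGroup E] [NormedSpace ℂ E]
    [MeasureSpace E] (D : Set E) : Prop :=
  ¬ ∃ D0 D1 : Set E, IsOpen D0 ∧ IsConnected D0 ∧ IsOpen D1 ∧ IsConnected D1 ∧
      D0 ⊆ D1 ∩ D ∧ ¬ (D1 ⊆ D) ∧
      ∀ f ∈ L2h D, ∃ F : E → ℂ, DifferentiableOn ℂ F D1 ∧ Set.EqOn F f D0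

/-- `w` is a regular boundary point of the domain `D ⊆ ℂ`. -/
def RegularBoundaryPt (D : Set ℂ) (w : ℂ) : Prop :=
  ∃ U : Set ℂ, IsOpen U ∧ w ∈ U ∧ ∃ u : ℂ → EReal, SubharmonicOn u (U ∩ D) ∧
    (∀ z ∈ U ∩ D, u z < 0) ∧ Tendsto u (𝓝[U ∩ D] w) (𝓝 (0 : EReal))

/-- The (pluricomplex) Green function of a domain `D ⊆ ℂ` with logarithmic pole at `p`. -/
noncomputable def greenFn (D : Set ℂ) (p z : ℂ) : EReal :=
  sSup {v : EReal | ∃ u : ℂ → EReal, SubharmonicOn u D ∧ (∀ x ∈ D, u x < 0) ∧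
    (∃ C : ℝ, ∀ᶠ x in 𝓝 p, u x ≤ ((Real.log ‖x - p‖ + C : ℝ) : EReal)) ∧ v = u z}

/-- A polydisc in `ℂⁿ` with centre `c` and multiradius `r`. -/
def polydisc {n : ℕ} (c : Fin n → ℂ) (r : Fin n → ℝ) : Set (Fin n → ℂ) :=
  {z | ∀ i, ‖z i - c i‖ < r i}


/-- logarithmic kernel -/
noncomputable def lker (z : ℂ) : ℝ≥0∞ := (-(ENNReal.log ‖z‖ₑ)).toENNReal

lemma lker_continuous : Continuous lker := by
  unfold lker
  exact (ENNReal.continuous_log.comp continuous_enorm).neg.ereal_toENNReal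

lemma lker_zero : lker 0 = ⊤ := by simp [lker]

lemma lker_ne {z : ℂ} (hz : z ≠ 0) : lker z = ENNReal.ofReal (-Real.log ‖z‖) := by
  have h : ENNReal.log ‖z‖ₑ = ((Real.log ‖z‖ : ℝ) : EReal) := by
    rw [← ofReal_norm, ENNReal.log_ofReal_of_pos (norm_pos_iff.2 hz)]
  unfold lker
  rw [h, ← EReal.coe_neg, EReal.toENNReal_of_ne_top (by simp)]
  simp

lemma lker_anti {z w : ℂ} (h : ‖z‖ ≤ ‖w‖) : lker w ≤ lker z := by
  unfold lker
  apply EReal.toENNReal_le_toENNReal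
  apply EReal.neg_le_neg_iff.2
  apply ENNReal.log_monotone
  exact enorm_le_iff_norm_le.2 h

lemma lker_neg (z : ℂ) : lker (-z) = lker z := by simp [lker]

lemma lker_sub_comm (z w : ℂ) : lker (z - w) = lker (w - z) := by
  rw [← lker_neg, neg_sub]

/-- potential -/
noncomputable def lpot {K : Set ℂ} (μ : Measure K) (z : ℂ) : ℝ≥0∞ := ∫⁻ ξ : K, lker (z - ξ) ∂μ

lemma lker_meas_sub {K : Set ℂ} (z : ℂ) : Measurable (fun ξ : K => lker (z - ξ)) :=
  (lker_continuous.comp (continuous_const.sub continuous_subtype_val)).measurable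

/-- Lemma A, first form. -/
lemma potential_dichotomy_aux {K : Set ℂ} (hK : IsCompact K) (hne : K.Nonempty) (M : ℝ) (hM : 0 < M)
    (hno : ¬ ∃ ν : Measure K, IsProbabilityMeasure ν ∧ ∀ x : K, ENNReal.ofReal M ≤ lpot ν x) :
    ∃ μ : Measure K, IsProbabilityMeasure μ ∧ ∃ C : ℝ, ∀ x : K, lpot μ x ≤ ENNReal.ofReal C := by
  have : CompactSpace K := isCompact_iff_compactSpace.1 hK
  have : Nonempty K := hne.to_subtype
  let A : Set C(K, ℝ) := {f | ∃ ν : Measure K, IsProbabilityMeasure ν ∧ ∃ ε : ℝ, 0 < ε ∧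
    ∀ x : K, ENNReal.ofReal (f x + ε) ≤ lpot ν x}
  have hconv : Convex ℝ A := by
    rintro f ⟨ν, hν, ε, hε, hf⟩ g ⟨ν', hν', ε', hε', hg⟩ a b ha hb hab
    refine ⟨ENNReal.ofReal a • ν + ENNReal.ofReal b • ν', ⟨?_⟩, a * ε + b * ε', ?_, ?_⟩
    · simp [← ENNReal.ofReal_add ha hb, hab]
    · rcases ha.eq_or_lt with rfl | ha
      · have : b = 1 := by linarith
        simp [this, hε']
      · have := mul_pos ha hε
        have := mul_nonneg hb hε'.le
        linarith
    · intro x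
      have h1 : lpot (ENNReal.ofReal a • ν + ENNReal.ofReal b • ν') x
          = ENNReal.ofReal a * lpot ν x + ENNReal.ofReal b * lpot ν' x := by
        simp [lpot, lintegral_add_measure, lintegral_smul_measure]
      rw [h1]
      calc ENNReal.ofReal ((a • f + b • g) x + (a * ε + b * ε'))
          = ENNReal.ofReal (a * (f x + ε) + b * (g x + ε')) := by
            congr 1; simp; ring
        _ ≤ ENNReal.ofReal (a * (f x + ε)) + ENNReal.ofReal (b * (g x + ε')) :=
            ENNReal.ofReal_add_le
        _ = ENNReal.ofReal a * ENNReal.ofReal (f x + ε) + ENNReal.ofReal b * ENNReal.ofReal (g x + ε') := by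
            rw [ENNReal.ofReal_mul ha, ENNReal.ofReal_mul hb]
        _ ≤ _ := by gcongr; exacts [hf x, hg x]
  have hopen : IsOpen A := by
    rw [Metric.isOpen_iff]
    rintro f ⟨ν, hν, ε, hε, hf⟩
    refine ⟨ε / 2, by positivity, ?_⟩
    intro g hg
    refine ⟨ν, hν, ε / 2, by positivity, fun x => le_trans (ENNReal.ofReal_le_ofReal ?_) (hf x)⟩
    have h1 := (ContinuousMap.dist_apply_le_dist (f := g) (g := f) x).trans_lt hg
    rw [Real.dist_eq, abs_lt] at h1
    linarith
  have hMA : ContinuousMap.const K M ∉ A := by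
    rintro ⟨ν, hν, ε, hε, hf⟩
    refine hno ⟨ν, hν, fun x => le_trans (ENNReal.ofReal_le_ofReal ?_) (hf x)⟩
    simp; linarith
  obtain ⟨Λ, hΛ⟩ := geometric_hahn_banach_open_point hconv hopen hMA
  obtain ⟨x0⟩ := (inferInstance : Nonempty K)
  have hneg : ∀ h : C(K, ℝ), (∀ x, h x ≤ -1) → Λ h < Λ (ContinuousMap.const K M) := by
    intro h hh
    apply hΛ
    refine ⟨Measure.dirac x0, inferInstance, 1, one_pos, fun x => ?_⟩
    rw [ENNReal.ofReal_of_nonpos (by linarith [hh x])]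
    exact zero_le
  have hMc : ContinuousMap.const K M = M • (1 : C(K, ℝ)) := by ext; simp
  rw [hMc, map_smul, smul_eq_mul] at hneg hΛ
  have h1 : 0 < Λ 1 := by
    have := hneg (-1) (by simp)
    rw [map_neg] at this
    nlinarith
  have hpos : ∀ h : C(K, ℝ), 0 ≤ h → 0 ≤ Λ h := by
    intro h hh
    by_contra hcon
    push Not at hcon
    obtain ⟨t, ht⟩ := exists_nat_gt ((M * Λ 1 + Λ 1) / (-Λ h))
    have := hneg (-1 - (t : ℝ) • h) (by
      intro x
      have : 0 ≤ h x := hh x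
      simp; positivity)
    rw [map_sub, map_neg, map_smul, smul_eq_mul] at this
    rw [div_lt_iff₀ (by linarith)] at ht
    nlinarith
  let Λ' : CompactlySupportedContinuousMap K ℝ →ₚ[ℝ] ℝ := PositiveLinearMap.mk₀
    { toFun := fun f => Λ f.toContinuousMap
      map_add' := fun f g => by rw [← map_add]; rfl
      map_smul' := fun c f => by
        rw [RingHom.id_apply, ← map_smul]; rfl } (by
      intro f hf
      exact hpos _ hf)
  have hint : ∀ f : C(K, ℝ), ∫ x, f x ∂(RealRMK.rieszMeasure Λ') = Λ f := by
    intro f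
    have := RealRMK.integral_rieszMeasure Λ' (CompactlySupportedContinuousMap.continuousMapEquiv f)
    exact this
  set μ := RealRMK.rieszMeasure Λ' with hμ
  have hfin : IsFiniteMeasure μ := by infer_instance
  have hmass : μ.real univ = Λ 1 := by
    have := hint 1
    simpa using this
  have hmass' : μ univ = ENNReal.ofReal (Λ 1) := by
    rw [← hmass, Measure.real, ENNReal.ofReal_toReal (measure_ne_top _ _)]
  have hpotμ : ∀ ξ : K, lpot μ ξ ≤ ENNReal.ofReal ((M + 1) * Λ 1) := by
    intro ξ
    have hN : ∀ N : ℕ, ∫⁻ x : K, min (lker (ξ - x)) N ∂μ ≤ ENNReal.ofReal ((M + 1) * Λ 1) := by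
      intro N
      let f : C(K, ℝ) := ⟨fun x => (min (lker (ξ - x)) N).toReal, by
        have hc : Continuous fun x : K => min (lker (ξ - x)) (N : ℝ≥0∞) :=
          (lker_continuous.comp (continuous_const.sub continuous_subtype_val)).min continuous_const
        rw [continuous_iff_continuousAt]
        intro x
        exact (ENNReal.tendsto_toReal (ne_top_of_le_ne_top (ENNReal.natCast_ne_top N)
          (min_le_right _ _))).comp (hc.continuousAt)⟩
      have hf : Λ (f - 1) < M * Λ 1 := by
        apply hΛ
        refine ⟨Measure.dirac ξ, inferInstance, 1, one_pos, fun x => ?_⟩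
        have : (f - 1) x + 1 = (min (lker (ξ - x)) N).toReal := by simp [f]
        rw [this, ENNReal.ofReal_toReal (ne_top_of_le_ne_top (ENNReal.natCast_ne_top N)
          (min_le_right _ _)), lpot, lintegral_dirac' _ (lker_meas_sub _), lker_sub_comm]
        exact min_le_left _ _
      rw [map_sub] at hf
      have : ∫⁻ x : K, min (lker (ξ - x)) N ∂μ = ENNReal.ofReal (∫ x, f x ∂μ) := by
        rw [ofReal_integral_eq_lintegral_ofReal]
        · apply lintegral_congr
          intro x
          exact (ENNReal.ofReal_toReal (ne_top_of_le_ne_top (ENNReal.natCast_ne_top N)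
          (min_le_right _ _))).symm
        · exact f.continuous.integrable_of_hasCompactSupport (HasCompactSupport.of_compactSpace _)
        · exact Eventually.of_forall fun x => ENNReal.toReal_nonneg
      rw [this, hint]
      apply ENNReal.ofReal_le_ofReal
      linarith
    have hsup : lpot μ ξ = ⨆ N : ℕ, ∫⁻ x : K, min (lker (ξ - x)) N ∂μ := by
      rw [← lintegral_iSup]
      · unfold lpot
        apply lintegral_congr
        intro x
        rw [← inf_iSup_eq, ENNReal.iSup_natCast]; simp
      · intro N
        exact (lker_meas_sub _).min measurable_const
      · intro a b hab x
        exact min_le_min_left _ (by exact_mod_cast hab)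
    rw [hsup]
    exact iSup_le hN
  refine ⟨(μ univ)⁻¹ • μ, ⟨?_⟩, (M + 1), fun x => ?_⟩
  · simp only [Measure.smul_apply, smul_eq_mul]
    rw [ENNReal.inv_mul_cancel _ (measure_ne_top _ _)]
    rw [hmass']; simpa using h1
  · have : lpot ((μ univ)⁻¹ • μ) x = (μ univ)⁻¹ * lpot μ x := by simp [lpot]
    rw [this]
    calc (μ univ)⁻¹ * lpot μ x ≤ (μ univ)⁻¹ * ENNReal.ofReal ((M + 1) * Λ 1) := by
          gcongr; exact hpotμ x
      _ = _ := by
        rw [ENNReal.ofReal_mul (by linarith), hmass', mul_comm, mul_assoc,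
          ENNReal.mul_inv_cancel (by simpa using h1) (by simp), mul_one]

/-- Lemma A. -/
lemma potential_dichotomy {K : Set ℂ} (hK : IsCompact K) (hne : K.Nonempty) :
    (∃ μ : Measure K, IsProbabilityMeasure μ ∧ ∃ C : ℝ, ∀ x : K, lpot μ x ≤ ENNReal.ofReal C) ∨
    (∃ ν : Measure K, IsProbabilityMeasure ν ∧ ∀ x : K, lpot ν x = ⊤) := by
  by_cases h : ∀ j : ℕ, ∃ ν : Measure K, IsProbabilityMeasure ν ∧
    ∀ x : K, ENNReal.ofReal (2 ^ (j + 1)) ≤ lpot ν x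
  · right
    choose ν hν h using h
    refine ⟨Measure.sum fun j => ((2 : ℝ≥0∞)⁻¹ ^ (j + 1)) • ν j, ⟨?_⟩, fun x => ?_⟩
    · rw [Measure.sum_apply _ MeasurableSet.univ]
      simp [ENNReal.tsum_geometric_add_one]
      exact ENNReal.inv_mul_cancel (by simp) (by simp)
    · unfold lpot
      rw [lintegral_sum_measure, eq_top_iff]
      calc (⊤ : ℝ≥0∞) = ∑' j : ℕ, 1 := by simp
        _ ≤ _ := by
          apply ENNReal.tsum_le_tsum
          intro j
          rw [lintegral_smul_measure, smul_eq_mul]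
          calc (1 : ℝ≥0∞) = 2⁻¹ ^ (j + 1) * ENNReal.ofReal (2 ^ (j + 1)) := by
                rw [ENNReal.ofReal_pow (by norm_num), ← mul_pow]
                simp [ENNReal.inv_mul_cancel]
            _ ≤ _ := by gcongr; exact h j x
  · left
    push Not at h
    obtain ⟨j, hj⟩ := h
    apply potential_dichotomy_aux hK hne (2 ^ (j + 1)) (by positivity)
    rintro ⟨ν, hν, h⟩
    obtain ⟨x, hx⟩ := hj ν hν
    exact absurd (h x) (not_le.2 hx)


lemma lpot_lsc {K : Set ℂ} (μ : Measure K) : LowerSemicontinuous (lpot μ) := by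
  intro z y hy
  by_contra hcon
  have hfr : ∃ᶠ x in 𝓝 z, lpot μ x ≤ y := by
    intro h; apply hcon; filter_upwards [h] with x hx; exact not_le.1 hx
  obtain ⟨s, hs, hs'⟩ := exists_seq_forall_of_frequently hfr
  have h1 : lpot μ z ≤ liminf (fun n => lpot μ (s n)) atTop := by
    unfold lpot
    refine le_trans (le_of_eq ?_) (lintegral_liminf_le (fun n => lker_meas_sub (s n)))
    apply lintegral_congr
    intro ξ
    have : Tendsto (fun n => lker (s n - ξ)) atTop (𝓝 (lker (z - ξ))) :=
      (lker_continuous.tendsto _).comp (hs.sub_const _)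
    exact this.liminf_eq.symm
  have h2 : liminf (fun n => lpot μ (s n)) atTop ≤ y := by
    refine le_trans (liminf_le_liminf (Eventually.of_forall hs')) (by simp)
  exact absurd (h1.trans h2) (not_le.2 hy)

lemma lpot_le_of_dist {K : Set ℂ} (μ : Measure K) [IsProbabilityMeasure μ] {z : ℂ} {η : ℝ}
    (hη : 0 < η) (h : ∀ ξ ∈ K, η ≤ ‖z - ξ‖) : lpot μ z ≤ ENNReal.ofReal (-Real.log η) := by
  unfold lpot
  calc ∫⁻ ξ : K, lker (z - ξ) ∂μ ≤ ∫⁻ ξ : K, ENNReal.ofReal (-Real.log η) ∂μ := by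
        apply lintegral_mono
        intro ξ
        have h1 := h ξ ξ.2
        have h2 : z - ξ ≠ 0 := norm_pos_iff.1 (hη.trans_le h1)
        show lker (z - ξ) ≤ _
        rw [lker_ne h2]
        apply ENNReal.ofReal_le_ofReal
        have := Real.log_le_log hη h1
        linarith
    _ = _ := by simp

lemma lpot_ge_of_dist {K : Set ℂ} (μ : Measure K) [IsProbabilityMeasure μ] {z : ℂ} {η : ℝ}
    (h : ∀ ξ ∈ K, ‖z - ξ‖ ≤ η) : ENNReal.ofReal (-Real.log η) ≤ lpot μ z := by
  unfold lpot
  calc ENNReal.ofReal (-Real.log η) = ∫⁻ ξ : K, ENNReal.ofReal (-Real.log η) ∂μ := by simp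
    _ ≤ ∫⁻ ξ : K, lker (z - ξ) ∂μ := by
        apply lintegral_mono
        intro ξ
        have h1 := h ξ ξ.2
        show _ ≤ lker (z - ξ)
        by_cases h2 : z - ξ = 0
        · rw [h2, lker_zero]; exact le_top
        rw [lker_ne h2]
        apply ENNReal.ofReal_le_ofReal
        have := Real.log_le_log (norm_pos_iff.2 h2) h1
        linarith

lemma lpot_lt_top_off {K : Set ℂ} (hK : IsCompact K) (μ : Measure K) [IsProbabilityMeasure μ] {z : ℂ}
    (hz : z ∉ K) : lpot μ z < ⊤ := by
  obtain ⟨η, hη, h⟩ := Metric.isOpen_iff.1 hK.isClosed.isOpen_compl z hz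
  refine (lpot_le_of_dist μ hη ?_).trans_lt ENNReal.ofReal_lt_top
  intro ξ hξ
  by_contra hcon
  push Not at hcon
  exact h (by rwa [mem_ball, dist_comm, dist_eq_norm]) hξ

lemma lker_half {a b : ℂ} (h : ‖b‖ ≤ 2 * ‖a‖) :
    lker a ≤ lker b + ENNReal.ofReal (Real.log 2) := by
  by_cases hb : b = 0
  · simp [hb, lker_zero]
  have hb' := norm_pos_iff.2 hb
  have ha' : 0 < ‖a‖ := by linarith
  rw [lker_ne hb, lker_ne (norm_pos_iff.1 ha'),]
  refine le_trans (ENNReal.ofReal_le_ofReal ?_) ENNReal.ofReal_add_le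
  have := Real.log_le_log hb' h
  rw [Real.log_mul (by norm_num) ha'.ne'] at this
  linarith

lemma lpot_bdd {K : Set ℂ} (hK : IsCompact K) (hne : K.Nonempty) (μ : Measure K)
    [IsProbabilityMeasure μ] {C : ℝ} (hC : ∀ x : K, lpot μ x ≤ ENNReal.ofReal C) (z : ℂ) :
    lpot μ z ≤ ENNReal.ofReal C + ENNReal.ofReal (Real.log 2) := by
  obtain ⟨x, hx, hxz⟩ := hK.exists_infDist_eq_dist hne z
  have : lpot μ z ≤ lpot μ x + ENNReal.ofReal (Real.log 2) := by
    calc lpot μ z ≤ ∫⁻ ξ : K, (lker (x - ξ) + ENNReal.ofReal (Real.log 2)) ∂μ := by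
          apply lintegral_mono
          intro ξ
          apply lker_half
          have h1 : dist z x ≤ dist z ξ := by rw [← hxz]; exact infDist_le_dist_of_mem ξ.2
          have h2 : dist x ξ ≤ dist x z + dist z ξ := dist_triangle _ _ _
          rw [← dist_eq_norm, ← dist_eq_norm]
          rw [dist_comm x z] at h2
          linarith
      _ = _ := by
        rw [lintegral_add_right _ measurable_const]; simp [lpot]
  exact this.trans (add_le_add_left (hC ⟨x, hx⟩) _)

lemma lint_circle (c ξ : ℂ) {r : ℝ} (hr : 0 < r) (h : ‖c - ξ‖ + r ≤ 1) :
    ∫⁻ θ in Ioc 0 (2 * Real.pi), lker (circleMap c r θ - ξ) =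
      ENNReal.ofReal (2 * Real.pi) * ENNReal.ofReal (-(Real.log r + Real.posLog (r⁻¹ * ‖c - ξ‖))) := by
  have hpi := Real.two_pi_pos
  rw [← circleAverage_log_norm_sub_const_eq_log_radius_add_posLog hr.ne', ← ENNReal.ofReal_mul hpi.le,
    Real.circleAverage_def, smul_eq_mul, ← mul_neg, ← mul_assoc, mul_inv_cancel₀ hpi.ne', one_mul,
    intervalIntegral.integral_of_le hpi.le, ← integral_neg, ofReal_integral_eq_lintegral_ofReal]
  · apply lintegral_congr_ae
    apply ae_restrict_of_ae
    have hc := (((countable_singleton ξ).preimage_circleMap c hr.ne').measure_zero volume)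
    rw [measure_eq_zero_iff_ae_notMem] at hc
    filter_upwards [hc] with θ hθ
    rw [lker_ne (sub_ne_zero.2 hθ)]
  · have := circleIntegrable_log_norm_sub_const (a := ξ) (c := c) r
    have h2 := (intervalIntegrable_iff_integrableOn_Ioc_of_le hpi.le).1 this
    exact h2.neg
  · refine Eventually.of_forall fun θ => ?_
    simp only [Pi.zero_apply]
    have : ‖circleMap c r θ - ξ‖ ≤ 1 := by
      calc ‖circleMap c r θ - ξ‖ = ‖(c - ξ) + circleMap 0 r θ‖ := by
            congr 1; simp [circleMap]; ring
        _ ≤ _ := by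
          refine (norm_add_le _ _).trans ?_
          simp [abs_of_pos hr, h]
    have := Real.log_nonpos (norm_nonneg _) this
    linarith

lemma log_add_posLog {r s : ℝ} (hr : 0 < r) (hs : 0 ≤ s) :
    Real.log r + Real.posLog (r⁻¹ * s) = Real.log (max r s) := by
  rcases le_total s r with h | h
  · rw [max_eq_left h, Real.posLog_eq_zero_iff _ |>.2, add_zero]
    rw [abs_of_nonneg (by positivity)]
    exact inv_mul_le_one_of_le₀ h hr.le
  · have hs' : 0 < s := hr.trans_le h
    rw [max_eq_right h, Real.posLog_eq_log, Real.log_mul (by positivity) hs'.ne', Real.log_inv]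
    · ring
    · rw [abs_of_nonneg (by positivity), ← div_eq_inv_mul, le_div_iff₀ hr]; linarith

lemma lint_circle_le (c ξ : ℂ) {r : ℝ} (hr : 0 < r) (h : ‖c - ξ‖ + r ≤ 1) :
    ∫⁻ θ in Ioc 0 (2 * Real.pi), lker (circleMap c r θ - ξ) ≤
      ENNReal.ofReal (2 * Real.pi) * lker (c - ξ) := by
  rw [lint_circle c ξ hr h, log_add_posLog hr (norm_nonneg _)]
  gcongr
  by_cases h2 : c - ξ = 0
  · rw [h2, lker_zero]; exact le_top
  rw [lker_ne h2]
  apply ENNReal.ofReal_le_ofReal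
  have := Real.log_le_log (norm_pos_iff.2 h2) (le_max_right r _)
  linarith

lemma lint_circle_eq (c ξ : ℂ) {r : ℝ} (hr : 0 < r) (h : ‖c - ξ‖ + r ≤ 1) (h' : r ≤ ‖c - ξ‖) :
    ∫⁻ θ in Ioc 0 (2 * Real.pi), lker (circleMap c r θ - ξ) =
      ENNReal.ofReal (2 * Real.pi) * lker (c - ξ) := by
  rw [lint_circle c ξ hr h, log_add_posLog hr (norm_nonneg _), max_eq_right h', lker_ne]
  exact norm_pos_iff.1 (hr.trans_le h')

lemma lker_meas2 {K : Set ℂ} (c : ℂ) (r : ℝ) :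
    Measurable (fun p : ℝ × K => lker (circleMap c r p.1 - p.2)) := by
  apply Continuous.measurable
  apply lker_continuous.comp
  exact ((continuous_circleMap c r).comp continuous_fst).sub
    (continuous_subtype_val.comp continuous_snd)

lemma lpot_circle_swap {K : Set ℂ} (μ : Measure K) [SFinite μ] (c : ℂ) (r : ℝ) :
    ∫⁻ θ in Ioc 0 (2 * Real.pi), lpot μ (circleMap c r θ) =
      ∫⁻ ξ : K, (∫⁻ θ in Ioc 0 (2 * Real.pi), lker (circleMap c r θ - ξ)) ∂μ := by
  unfold lpot
  rw [lintegral_lintegral_swap]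
  exact (lker_meas2 c r).aemeasurable

lemma lpot_circle_le {K : Set ℂ} (μ : Measure K) [SFinite μ] (c : ℂ) {r : ℝ} (hr : 0 < r)
    (h : ∀ ξ ∈ K, ‖c - ξ‖ + r ≤ 1) :
    ∫⁻ θ in Ioc 0 (2 * Real.pi), lpot μ (circleMap c r θ) ≤
      ENNReal.ofReal (2 * Real.pi) * lpot μ c := by
  rw [lpot_circle_swap, lpot, ← lintegral_const_mul _ (lker_meas_sub c)]
  exact lintegral_mono fun ξ => lint_circle_le c ξ hr (h ξ ξ.2)

lemma lpot_circle_eq {K : Set ℂ} (μ : Measure K) [SFinite μ] (c : ℂ) {r : ℝ} (hr : 0 < r)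
    (h : ∀ ξ ∈ K, ‖c - ξ‖ + r ≤ 1) (h' : ∀ ξ ∈ K, r ≤ ‖c - ξ‖) :
    ∫⁻ θ in Ioc 0 (2 * Real.pi), lpot μ (circleMap c r θ) =
      ENNReal.ofReal (2 * Real.pi) * lpot μ c := by
  rw [lpot_circle_swap, lpot, ← lintegral_const_mul _ (lker_meas_sub c)]
  exact lintegral_congr fun ξ => lint_circle_eq c ξ hr (h ξ ξ.2) (h' ξ ξ.2)

lemma lpot_meas {K : Set ℂ} (μ : Measure K) : Measurable (lpot μ) := (lpot_lsc μ).measurable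

lemma neg_lpot_subharmonic {K : Set ℂ} (μ : Measure K) [IsProbabilityMeasure μ] (w : ℂ)
    (hKw : K ⊆ closedBall w (1/4)) :
    SubharmonicOn (fun z => -(lpot μ z : EReal)) (ball w (1/4)) := by
  refine ⟨?_, ?_, ?_⟩
  · apply UpperSemicontinuous.upperSemicontinuousOn
    intro z y hy
    have h1 : -y < (lpot μ z : EReal) := EReal.neg_lt_comm.1 hy
    have h2 : LowerSemicontinuous (fun z => (lpot μ z : EReal)) :=
      continuous_coe_ennreal_ereal.comp_lowerSemicontinuous (lpot_lsc μ)
        (fun a b hab => EReal.coe_ennreal_le_coe_ennreal_iff.2 hab)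
    filter_upwards [h2 z _ h1] with x hx
    exact EReal.neg_lt_comm.1 hx
  · intro z _
    have : (0 : EReal) ≤ lpot μ z := EReal.coe_ennreal_nonneg _
    have : -(lpot μ z : EReal) ≤ 0 := by simpa using this
    exact this.trans_lt (by simp)
  · intro c hc R hR hball
    apply le_iInf
    intro n
    have hdist : ∀ ξ ∈ K, ‖c - ξ‖ + R ≤ 1 := by
      intro ξ hξ
      have h1 : dist ξ w ≤ 1/4 := hKw hξ
      have h2 : dist c w < 1/4 := hc
      have h3 : dist c ξ ≤ dist c w + dist w ξ := dist_triangle _ _ _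
      rw [dist_comm w ξ] at h3
      rw [← dist_eq_norm]
      have h4 : c + R ∈ ball w (1/4) := hball (by simp [abs_of_pos hR])
      have h5 : c - R ∈ ball w (1/4) := hball (by simp [abs_of_pos hR])
      have h6 : dist (c + R) (c - R) ≤ dist (c+R) w + dist w (c-R) := dist_triangle _ _ _
      rw [dist_comm w] at h6
      rw [mem_ball] at h4 h5
      have h7 : dist (c + (R:ℂ)) (c - R) = 2 * R := by
        rw [dist_eq_norm]
        have : c + (R:ℂ) - (c - R) = ((2 * R : ℝ) : ℂ) := by push_cast; ring
        rw [this, Complex.norm_real]; simp [abs_of_pos hR]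
      linarith
    have hle := lpot_circle_le μ c hR hdist
    have hpi := Real.two_pi_pos
    have havg : circleAvgTrunc (fun z => -(lpot μ z : EReal)) c R n =
        -((2 * Real.pi)⁻¹ * (∫⁻ θ in Ioc 0 (2 * Real.pi), min (lpot μ (circleMap c R θ)) n).toReal) := by
      unfold circleAvgTrunc
      rw [intervalIntegral.integral_of_le hpi.le, ← mul_neg, ← integral_toReal, ← integral_neg]
      · congr 1
        apply integral_congr_ae
        refine Eventually.of_forall fun θ => ?_
        show (max (-(lpot μ (circleMap c R θ) : EReal)) (-((n:ℝ):EReal))).toReal = _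
        have h0 : ((n:ℝ):EReal) = ((n : ℝ≥0∞) : EReal) := by simp; rfl
        rw [h0, EReal.max_neg_neg, EReal.toReal_neg_eq]
        congr 1
        rcases le_total (lpot μ (circleMap c R θ)) n with h | h
        · rw [min_eq_left h, min_eq_left (EReal.coe_ennreal_le_coe_ennreal_iff.2 h),
            EReal.toReal_coe_ennreal]
        · rw [min_eq_right h, min_eq_right (EReal.coe_ennreal_le_coe_ennreal_iff.2 h),
            EReal.toReal_coe_ennreal]
      · exact (((lpot_meas μ).comp (measurable_circleMap c R)).min measurable_const).aemeasurable
      · exact Eventually.of_forall fun θ => (min_le_right _ _).trans_lt (by simp)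
    rw [havg]
    by_cases htop : lpot μ c = ⊤
    · simp [htop]
    · have h1 : (∫⁻ θ in Ioc 0 (2 * Real.pi), min (lpot μ (circleMap c R θ)) n)
          ≤ ENNReal.ofReal (2 * Real.pi) * lpot μ c :=
        (lintegral_mono fun θ => min_le_left _ _).trans hle
      have h2 := ENNReal.toReal_mono (ENNReal.mul_ne_top ENNReal.ofReal_ne_top htop) h1
      rw [ENNReal.toReal_mul, ENNReal.toReal_ofReal hpi.le] at h2
      have h3 : (lpot μ c : EReal) = ((lpot μ c).toReal : EReal) :=
        (EReal.coe_ennreal_toReal htop).symm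
      show -(lpot μ c : EReal) ≤ _
      rw [h3, ← EReal.coe_neg, EReal.coe_le_coe_iff, neg_le_neg_iff, inv_mul_le_iff₀ hpi]
      exact h2


lemma lint_lker_real : ∫⁻ s : ℝ, lker (s : ℂ) < ⊤ := by
  have hint : IntegrableOn Real.log (Ioc (-1) 1) := by
    have := intervalIntegral.intervalIntegrable_log' (a := -1) (b := 1)
    exact (intervalIntegrable_iff_integrableOn_Ioc_of_le (by norm_num)).1 this
  have h1 : ∫⁻ s in Ioc (-1 : ℝ) 1, ENNReal.ofReal (-Real.log s) < ⊤ := hint.neg.lintegral_lt_top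
  refine lt_of_le_of_lt ?_ h1
  rw [← lintegral_indicator measurableSet_Ioc]
  apply lintegral_mono_ae
  have hc : ∀ᵐ s : ℝ, s ≠ 0 := by simp [ae_iff]
  filter_upwards [hc] with s hs
  rw [lker_ne (by exact_mod_cast hs), Complex.norm_real, Real.norm_eq_abs, Real.log_abs]
  by_cases hm : s ∈ Ioc (-1 : ℝ) 1
  · rw [indicator_of_mem hm]
  · rw [indicator_of_notMem hm]
    have : 1 ≤ |s| := by
      by_contra hcon
      push Not at hcon
      rw [abs_lt] at hcon
      exact hm ⟨hcon.1, hcon.2.le⟩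
    have := Real.log_nonneg this
    rw [Real.log_abs] at this
    simp [this]

lemma proj_null {K : Set ℂ} (ν : Measure K) [IsProbabilityMeasure ν] (hν : ∀ x : K, lpot ν x = ⊤)
    (T : ℂ → ℝ) (hT : Continuous T) (hT' : ∀ x y, |T x - T y| ≤ ‖x - y‖) : volume (T '' K) = 0 := by
  have hm : Measurable (fun p : ℝ × K => lker ((p.1 - T p.2 : ℝ) : ℂ)) := by
    apply Continuous.measurable
    apply lker_continuous.comp
    apply Complex.continuous_ofReal.comp
    exact continuous_fst.sub (hT.comp (continuous_subtype_val.comp continuous_snd))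
  have h1 : ∫⁻ s : ℝ, ∫⁻ ξ : K, lker ((s - T ξ : ℝ) : ℂ) ∂ν < ⊤ := by
    rw [lintegral_lintegral_swap hm.aemeasurable]
    have : ∀ ξ : K, ∫⁻ s : ℝ, lker ((s - T ξ : ℝ) : ℂ) = ∫⁻ s : ℝ, lker (s : ℂ) := by
      intro ξ
      exact lintegral_sub_right_eq_self (fun s : ℝ => lker (s : ℂ)) (T ξ)
    simp only [this]
    simpa using lint_lker_real
  have h2 := ae_lt_top (Measurable.lintegral_prod_right hm) h1.ne
  rw [ae_iff] at h2
  refine measure_mono_null ?_ h2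
  rintro _ ⟨x, hx, rfl⟩
  simp only [not_lt, top_le_iff, mem_ofPred_eq]
  rw [eq_top_iff, ← hν ⟨x, hx⟩]
  apply lintegral_mono
  intro ξ
  apply lker_anti
  rw [Complex.norm_real]
  exact hT' _ _

lemma re_null {K : Set ℂ} (ν : Measure K) [IsProbabilityMeasure ν] (hν : ∀ x : K, lpot ν x = ⊤) :
    volume (Complex.re '' K) = 0 := by
  apply proj_null ν hν _ Complex.continuous_re
  intro x y
  rw [← Complex.sub_re]; exact Complex.abs_re_le_norm _

lemma im_null {K : Set ℂ} (ν : Measure K) [IsProbabilityMeasure ν] (hν : ∀ x : K, lpot ν x = ⊤) :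
    volume (Complex.im '' K) = 0 := by
  apply proj_null ν hν _ Complex.continuous_im
  intro x y
  rw [← Complex.sub_im]; exact Complex.abs_im_le_norm _

lemma exists_notMem_null {N : Set ℝ} (hN : volume N = 0) {a b : ℝ} (hab : a < b) :
    ∃ s ∈ Ioo a b, s ∉ N := by
  by_contra hcon
  push Not at hcon
  have : volume (Ioo a b) ≤ 0 := by rw [← hN]; exact measure_mono hcon
  simp at this
  linarith

lemma box_not_separated {K : Set ℂ} (hre : volume (Complex.re '' K) = 0)
    (him : volume (Complex.im '' K) = 0) {a b c d : ℝ} {W1 W2 : Set ℂ} (h1 : IsOpen W1)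
    (h2 : IsOpen W2) (hdisj : Disjoint W1 W2)
    (hsub : Ioo a b ×ℂ Ioo c d ⊆ W1 ∪ W2 ∪ K) (hp : ((Ioo a b ×ℂ Ioo c d) ∩ W1).Nonempty)
    (hq : ((Ioo a b ×ℂ Ioo c d) ∩ W2).Nonempty) : False := by
  have hSo : IsOpen (Ioo a b ×ℂ Ioo c d) := isOpen_Ioo.reProdIm isOpen_Ioo
  obtain ⟨p, hp⟩ := hp
  obtain ⟨q, hq⟩ := hq
  obtain ⟨ε, hε, hpε⟩ := Metric.isOpen_iff.1 (hSo.inter h1) p hp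
  obtain ⟨ε', hε', hqε⟩ := Metric.isOpen_iff.1 (hSo.inter h2) q hq
  obtain ⟨s, hs, hsK⟩ := exists_notMem_null hre (show p.re - ε < p.re + ε by linarith)
  obtain ⟨t, ht, htK⟩ := exists_notMem_null him (show q.im - ε' < q.im + ε' by linarith)
  have hp' : (⟨s, p.im⟩ : ℂ) ∈ (Ioo a b ×ℂ Ioo c d) ∩ W1 := by
    apply hpε
    rw [mem_ball, Complex.dist_of_im_eq (by simp), Real.dist_eq, abs_lt]
    constructor <;> simp only <;> linarith [hs.1, hs.2]
  have hq' : (⟨q.re, t⟩ : ℂ) ∈ (Ioo a b ×ℂ Ioo c d) ∩ W2 := by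
    apply hqε
    rw [mem_ball, Complex.dist_of_re_eq (by simp), Real.dist_eq, abs_lt]
    constructor <;> simp only <;> linarith [ht.1, ht.2]
  have hs1 : s ∈ Ioo a b := hp'.1.1
  have ht1 : t ∈ Ioo c d := hq'.1.2
  let A : Set ℂ := (fun y : ℝ => (⟨s, y⟩ : ℂ)) '' Ioo c d
  let B : Set ℂ := (fun x : ℝ => (⟨x, t⟩ : ℂ)) '' Ioo a b
  have hcs : Continuous (fun y : ℝ => (⟨s, y⟩ : ℂ)) :=
    Complex.equivRealProdCLM.symm.continuous.comp (continuous_const.prodMk continuous_id)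
  have hct : Continuous (fun x : ℝ => (⟨x, t⟩ : ℂ)) :=
    Complex.equivRealProdCLM.symm.continuous.comp (continuous_id.prodMk continuous_const)
  have hA : IsPreconnected A := isPreconnected_Ioo.image _ hcs.continuousOn
  have hB : IsPreconnected B := isPreconnected_Ioo.image _ hct.continuousOn
  have hAB : IsPreconnected (A ∪ B) :=
    IsPreconnected.union (⟨s, t⟩ : ℂ) ⟨t, ht1, rfl⟩ ⟨s, hs1, rfl⟩ hA hB
  have hABs : A ∪ B ⊆ W1 ∪ W2 := by
    rintro x (⟨y, hy, rfl⟩ | ⟨y, hy, rfl⟩)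
    · rcases hsub (show (⟨s, y⟩ : ℂ) ∈ Ioo a b ×ℂ Ioo c d from ⟨hs1, hy⟩) with h | h
      · exact h
      · exact absurd ⟨_, h, rfl⟩ hsK
    · rcases hsub (show (⟨y, t⟩ : ℂ) ∈ Ioo a b ×ℂ Ioo c d from ⟨hy, ht1⟩) with h | h
      · exact h
      · exact absurd ⟨_, h, rfl⟩ htK
  obtain ⟨x, -, hx⟩ := hAB W1 W2 h1 h2 hABs ⟨_, Or.inl ⟨p.im, hp'.1.2, rfl⟩, hp'.2⟩
    ⟨_, Or.inr ⟨q.re, hq'.1.1, rfl⟩, hq'.2⟩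
  exact Set.disjoint_left.1 hdisj hx.1 hx.2


/-- `a ↦ (h ↦ Re (a h))`. -/
noncomputable def reMulL : ℂ →L[ℝ] (ℂ →L[ℝ] ℝ) :=
  (ContinuousLinearMap.compL ℝ ℂ ℂ ℝ Complex.reCLM).comp (ContinuousLinearMap.mul ℝ ℂ)

@[simp] lemma reMulL_apply (a h : ℂ) : reMulL a h = (a * h).re := rfl

lemma reMulL_norm_le (a : ℂ) : ‖reMulL a‖ ≤ ‖a‖ := by
  apply ContinuousLinearMap.opNorm_le_bound _ (norm_nonneg _)
  intro h
  rw [reMulL_apply, ← norm_mul]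
  exact Complex.abs_re_le_norm _

lemma hasFDerivAt_log_norm {v : ℂ} (hv : v ≠ 0) :
    HasFDerivAt (fun z : ℂ => Real.log ‖z‖) (reMulL v⁻¹) v := by
  have h1 : HasFDerivAt (fun z : ℂ => ‖z‖ ^ 2) (2 • (innerSL ℝ v)) v :=
    (hasStrictFDerivAt_norm_sq v).hasFDerivAt
  have h2 := (h1.log (by positivity)).const_mul (1/2 : ℝ)
  have h3 : (fun z : ℂ => Real.log ‖z‖) = fun z => (1/2 : ℝ) * Real.log (‖z‖ ^ 2) := by
    ext z; rw [Real.log_pow]; push_cast; ring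
  rw [h3]
  refine h2.congr_fderiv ?_
  apply ContinuousLinearMap.ext
  intro h
  have hn : ‖v‖ ^ 2 = Complex.normSq v := (Complex.normSq_eq_norm_sq v).symm
  have hi : inner ℝ v h = v.re * h.re + v.im * h.im := by
    rw [Complex.inner]; simp; ring
  have h4 : ((1 / 2 : ℝ) • (‖v‖ ^ 2)⁻¹ • 2 • innerSL ℝ v) h = (1/2) * ((Complex.normSq v)⁻¹ * (2 * inner ℝ v h)) := by
    rw [← hn]; simp; left; ring
  refine h4.trans ?_
  rw [hi, reMulL_apply, Complex.mul_re, Complex.inv_re, Complex.inv_im]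
  ring

lemma norm_lower {X : Type*} {γ : X → ℂ} {z0 z : ℂ} {η : ℝ}
    (hη : ∀ x, η ≤ ‖z0 - γ x‖) (hz : z ∈ ball z0 (η / 2)) (x : X) : η / 2 ≤ ‖z - γ x‖ := by
  have h1 := hη x
  have h2 : ‖z0 - γ x‖ ≤ ‖z0 - z‖ + ‖z - γ x‖ := norm_sub_le_norm_sub_add_norm_sub _ _ _
  rw [mem_ball, dist_comm, dist_eq_norm] at hz
  linarith

lemma hasFDerivAt_log_integral {X : Type*} [MeasurableSpace X] (μ : Measure X) [IsFiniteMeasure μ]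
    (γ : X → ℂ) (hγ : Measurable γ) {R : ℝ} (hR : ∀ x, ‖γ x‖ ≤ R) {z0 : ℂ} {η : ℝ} (hη0 : 0 < η)
    (hη : ∀ x, η ≤ ‖z0 - γ x‖) :
    HasFDerivAt (fun z => ∫ x, Real.log ‖z - γ x‖ ∂μ) (reMulL (∫ x, (z0 - γ x)⁻¹ ∂μ)) z0 := by
  have hbm : ∀ z ∈ ball z0 (η / 2), ∀ x, ‖(z - γ x)⁻¹‖ ≤ (η/2)⁻¹ := by
    intro z hz x
    rw [norm_inv]
    exact inv_anti₀ (by positivity) (norm_lower hη hz x)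
  have hz0 : z0 ∈ ball z0 (η / 2) := mem_ball_self (by positivity)
  have hint : Integrable (fun x => (z0 - γ x)⁻¹) μ :=
    Integrable.of_bound (by fun_prop) (η/2)⁻¹ (Eventually.of_forall (hbm z0 hz0))
  rw [← ContinuousLinearMap.integral_comp_comm _ hint]
  refine hasFDerivAt_integral_of_dominated_of_fderiv_le (F := fun z x => Real.log ‖z - γ x‖)
    (F' := fun z x => reMulL (z - γ x)⁻¹) (bound := fun _ => (η/2)⁻¹) (ball_mem_nhds z0 (show 0 < η/2 by positivity)) ?_ ?_ ?_ ?_ ?_ ?_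
  · refine Eventually.of_forall fun z => ?_
    have : Measurable fun x => Real.log ‖z - γ x‖ := by fun_prop
    exact this.aestronglyMeasurable
  · have hm : Measurable fun x => Real.log ‖z0 - γ x‖ := by fun_prop
    refine Integrable.of_bound hm.aestronglyMeasurable (|Real.log η| + |Real.log (‖z0‖ + R)|) (Eventually.of_forall fun x => ?_)
    have h1 := Real.log_le_log hη0 (hη x)
    have h2 : Real.log ‖z0 - γ x‖ ≤ Real.log (‖z0‖ + R) := by
      apply Real.log_le_log (hη0.trans_le (hη x))
      exact (norm_sub_le _ _).trans (by linarith [hR x])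
    rw [Real.norm_eq_abs, abs_le]
    constructor
    · linarith [neg_abs_le (Real.log η), abs_nonneg (Real.log (‖z0‖ + R))]
    · linarith [le_abs_self (Real.log (‖z0‖ + R)), abs_nonneg (Real.log η)]
  · exact (reMulL.continuous.comp_aestronglyMeasurable hint.aestronglyMeasurable)
  · exact Eventually.of_forall fun x z hz => (reMulL_norm_le _).trans (hbm z hz x)
  · exact integrable_const _
  · refine Eventually.of_forall fun x z hz => ?_
    have hne : z - γ x ≠ 0 := norm_pos_iff.1 (lt_of_lt_of_le (by positivity) (norm_lower hη hz x))
    have := (hasFDerivAt_log_norm hne).comp z ((hasFDerivAt_id z).sub_const (γ x))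
    simpa using! this

lemma hasDerivAt_cauchy_pow {X : Type*} [MeasurableSpace X] (μ : Measure X) [IsFiniteMeasure μ]
    (γ : X → ℂ) (hγ : AEMeasurable γ μ) (g : X → ℂ) (hg : Integrable g μ) {z0 : ℂ} {η : ℝ} (hη0 : 0 < η)
    (hη : ∀ x, η ≤ ‖z0 - γ x‖) :
    HasDerivAt (fun z => ∫ x, g x * (z - γ x)⁻¹ ∂μ) (∫ x, g x * (-(((z0 - γ x)⁻¹) ^ 2)) ∂μ) z0 := by
  have hbm : ∀ z ∈ ball z0 (η / 2), ∀ x, ‖(z - γ x)⁻¹‖ ≤ (η/2)⁻¹ := by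
    intro z hz x
    rw [norm_inv]
    exact inv_anti₀ (by positivity) (norm_lower hη hz x)
  have hz0 : z0 ∈ ball z0 (η / 2) := mem_ball_self (by positivity)
  have hm : ∀ z, AEStronglyMeasurable (fun x => (z - γ x)⁻¹) μ := fun z => by
    have : AEMeasurable (fun x => (z - γ x)⁻¹) μ := (hγ.const_sub z).inv
    exact this.aestronglyMeasurable
  refine (hasDerivAt_integral_of_dominated_loc_of_deriv_le (F := fun z x => g x * (z - γ x)⁻¹)
    (F' := fun z x => g x * (-(((z - γ x)⁻¹) ^ 2))) (bound := fun x => ‖g x‖ * ((η/2)⁻¹)^2)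
    (ball_mem_nhds z0 (show 0 < η/2 by positivity)) ?_ ?_ ?_ ?_ ?_ ?_).2
  · exact Eventually.of_forall fun z => hg.aestronglyMeasurable.mul (hm z)
  · exact hg.mul_bdd (c := (η/2)⁻¹) (hm z0) (Eventually.of_forall (hbm z0 hz0))
  · exact hg.aestronglyMeasurable.mul ((hm z0).pow 2).neg
  · refine Eventually.of_forall fun x z hz => ?_
    rw [norm_mul, norm_neg, norm_pow]
    gcongr
    exact hbm z hz x
  · exact hg.norm.mul_const _
  · refine Eventually.of_forall fun x z hz => ?_
    have hne : z - γ x ≠ 0 := norm_pos_iff.1 (lt_of_lt_of_le (by positivity) (norm_lower hη hz x))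
    have := (((hasDerivAt_id z).sub_const (γ x)).inv hne).const_mul (g x)
    refine this.congr_deriv ?_
    show g x * (-1 / (z - γ x) ^ 2) = _
    rw [neg_div, one_div, inv_pow]


noncomputable def tr (u : ℂ → EReal) (n : ℕ) (z : ℂ) : ℝ := (max (u z) (-(n : ℝ) : EReal)).toReal

lemma tr_coe {u : ℂ → EReal} {z : ℂ} (h : u z < ⊤) (n : ℕ) :
    ((tr u n z : ℝ) : EReal) = max (u z) (-(n : ℝ) : EReal) := by
  unfold tr
  apply EReal.coe_toReal
  · apply ne_of_lt
    apply max_lt h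
    rw [← EReal.coe_neg]; exact EReal.coe_lt_top _
  · apply ne_of_gt
    refine lt_of_lt_of_le ?_ (le_max_right _ _)
    rw [← EReal.coe_neg]; exact EReal.bot_lt_coe _

lemma tr_bot {u : ℂ → EReal} {z : ℂ} (h : u z = ⊥) (n : ℕ) : tr u n z = -n := by
  have := tr_coe (u := u) (z := z) (by rw [h]; exact bot_lt_top) n
  rw [h, max_eq_right bot_le, ← EReal.coe_neg] at this
  exact_mod_cast this

lemma le_tr {u : ℂ → EReal} {z : ℂ} (h : u z < ⊤) (n : ℕ) : -(n:ℝ) ≤ tr u n z := by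
  have := tr_coe h n
  have h2 : ((-(n:ℝ) : ℝ) : EReal) ≤ ((tr u n z : ℝ) : EReal) := by
    rw [this, EReal.coe_neg]; exact le_max_right _ _
  exact_mod_cast h2

lemma toReal_le_tr {u : ℂ → EReal} {z : ℂ} (h : u z < ⊤) (h' : u z ≠ ⊥) (n : ℕ) :
    (u z).toReal ≤ tr u n z := by
  have h2 : (((u z).toReal : ℝ) : EReal) ≤ ((tr u n z : ℝ) : EReal) := by
    rw [tr_coe h n, EReal.coe_toReal h.ne h']; exact le_max_left _ _
  exact_mod_cast h2

lemma tr_le_zero {u : ℂ → EReal} {z : ℂ} (h : u z < ⊤) (n : ℕ) : tr u n z ≤ tr u 0 z := by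
  have h2 : ((tr u n z : ℝ) : EReal) ≤ ((tr u 0 z : ℝ) : EReal) := by
    rw [tr_coe h n, tr_coe h 0]
    apply max_le_max le_rfl
    rw [← EReal.coe_neg, ← EReal.coe_neg]
    simp
  exact_mod_cast h2

lemma tr_usc {u : ℂ → EReal} {Ω : Set ℂ} (hu : SubharmonicOn u Ω) (n : ℕ) :
    UpperSemicontinuousOn (tr u n) Ω := by
  intro x hx y hy
  have hxt := hu.2.1 x hx
  have h1 : ((tr u n x : ℝ) : EReal) < (y : EReal) := by exact_mod_cast hy
  rw [tr_coe hxt n] at h1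
  filter_upwards [hu.1 x hx (y : EReal) (lt_of_le_of_lt (le_max_left _ _) h1), self_mem_nhdsWithin] with z hz hz2
  have : ((tr u n z : ℝ) : EReal) < (y : EReal) := by
    rw [tr_coe (hu.2.1 z hz2) n]
    exact max_lt hz (lt_of_le_of_lt (le_max_right _ _) h1)
  exact_mod_cast this

lemma tr_bdd {u : ℂ → EReal} {Ω : Set ℂ} (hu : SubharmonicOn u Ω) {L : Set ℂ} (hL : IsCompact L)
    (hLΩ : L ⊆ Ω) : ∃ B : ℝ, 0 ≤ B ∧ ∀ n, ∀ z ∈ L, tr u n z ≤ B := by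
  rcases L.eq_empty_or_nonempty with h | h
  · exact ⟨0, le_rfl, by simp [h]⟩
  · obtain ⟨a, ha, hmax⟩ := UpperSemicontinuousOn.exists_isMaxOn h hL ((tr_usc hu 0).mono hLΩ)
    refine ⟨max 0 (tr u 0 a), le_max_left _ _, fun n z hz => ?_⟩
    exact (tr_le_zero (hu.2.1 z (hLΩ hz)) n).trans ((hmax hz).trans (le_max_right _ _))

lemma tr_circle_int {u : ℂ → EReal} {Ω : Set ℂ} (hu : SubharmonicOn u Ω) {c : ℂ} {R : ℝ} (hR : 0 < R)
    (hc : closedBall c R ⊆ Ω) (n : ℕ) :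
    IntervalIntegrable (fun θ => tr u n (circleMap c R θ)) volume 0 (2 * Real.pi) := by
  have hm : ∀ θ, circleMap c R θ ∈ closedBall c R := fun θ => circleMap_mem_closedBall c hR.le θ
  obtain ⟨B, hB0, hB⟩ := tr_bdd hu (isCompact_closedBall c R) hc
  have husc : UpperSemicontinuous (fun θ => tr u n (circleMap c R θ)) := by
    intro θ y hy
    have h1 := tr_usc hu n (circleMap c R θ) (hc (hm θ)) y hy
    have h2 : Tendsto (circleMap c R) (𝓝 θ) (𝓝[Ω] (circleMap c R θ)) :=
      tendsto_nhdsWithin_iff.2 ⟨(continuous_circleMap c R).continuousAt, Eventually.of_forall fun t => hc (hm t)⟩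
    exact h2.eventually h1
  have := husc.measurable
  rw [intervalIntegrable_iff_integrableOn_Ioc_of_le Real.two_pi_pos.le]
  refine Integrable.of_bound this.aestronglyMeasurable (max B n) (Eventually.of_forall fun θ => ?_)
  have h1 := hB n _ (hm θ)
  have h2 := le_tr (hu.2.1 _ (hc (hm θ))) n
  rw [Real.norm_eq_abs, abs_le]
  constructor
  · linarith [le_max_right B (n:ℝ)]
  · exact h1.trans (le_max_left _ _)

lemma sub_le_avg {u : ℂ → EReal} {Ω : Set ℂ} (hu : SubharmonicOn u Ω) {c : ℂ} {R : ℝ} (hR : 0 < R)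
    (hc : closedBall c R ⊆ Ω) (n : ℕ) :
    u c ≤ (((2 * Real.pi)⁻¹ * ∫ θ in (0:ℝ)..(2 * Real.pi), tr u n (circleMap c R θ) : ℝ) : EReal) :=
  (hu.2.2 c (hc (mem_closedBall_self hR.le)) R hR hc).trans (iInf_le _ n)

lemma tr_submean {u : ℂ → EReal} {Ω : Set ℂ} (hu : SubharmonicOn u Ω) {c : ℂ} {R : ℝ} (hR : 0 < R)
    (hc : closedBall c R ⊆ Ω) (n : ℕ) :
    2 * Real.pi * tr u n c ≤ ∫ θ in (0:ℝ)..(2 * Real.pi), tr u n (circleMap c R θ) := by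
  have hpi : (0:ℝ) < 2 * Real.pi := by positivity
  have h1 := sub_le_avg hu hR hc n
  have h2 : -(n:ℝ) * (2 * Real.pi) ≤ ∫ θ in (0:ℝ)..(2 * Real.pi), tr u n (circleMap c R θ) := by
    have : ∫ θ in (0:ℝ)..(2 * Real.pi), (-(n:ℝ)) = -(n:ℝ) * (2 * Real.pi) := by simp; ring
    rw [← this]
    apply intervalIntegral.integral_mono_on hpi.le (by simp) (tr_circle_int hu hR hc n)
    intro θ _
    exact le_tr (hu.2.1 _ (hc (circleMap_mem_closedBall c hR.le θ))) n
  set I := ∫ θ in (0:ℝ)..(2 * Real.pi), tr u n (circleMap c R θ)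
  have h3 : ((tr u n c : ℝ) : EReal) ≤ (((2 * Real.pi)⁻¹ * I : ℝ) : EReal) := by
    rw [tr_coe (hu.2.1 _ (hc (mem_closedBall_self hR.le))) n]
    apply max_le h1
    rw [← EReal.coe_neg, EReal.coe_le_coe_iff, inv_mul_eq_div, le_div_iff₀ hpi]
    exact h2
  rw [EReal.coe_le_coe_iff, inv_mul_eq_div, le_div_iff₀ hpi] at h3
  linarith

lemma submean_bot {u : ℂ → EReal} {Ω : Set ℂ} (hu : SubharmonicOn u Ω) {c : ℂ} {R : ℝ} (hR : 0 < R)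
    (hc : closedBall c R ⊆ Ω) {g : ℂ} (hg : dist g c = R) (hbot : ∀ᶠ z in 𝓝 g, u z = ⊥) : u c = ⊥ := by
  have hpi : (0:ℝ) < 2 * Real.pi := by positivity
  have hm : ∀ θ, circleMap c R θ ∈ closedBall c R := fun θ => circleMap_mem_closedBall c hR.le θ
  obtain ⟨B, hB0, hB⟩ := tr_bdd hu (isCompact_closedBall c R) hc
  obtain ⟨θ0, hθ0, hθg⟩ : ∃ θ ∈ Ioc 0 (2 * Real.pi), circleMap c R θ = g := by
    have : g ∈ circleMap c R '' Ioc 0 (2 * Real.pi) := by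
      rw [image_circleMap_Ioc, abs_of_pos hR]; exact hg
    exact this
  have h1 : ∀ᶠ θ in 𝓝 θ0, u (circleMap c R θ) = ⊥ := by
    have : Tendsto (circleMap c R) (𝓝 θ0) (𝓝 g) := by
      rw [← hθg]; exact (continuous_circleMap c R).continuousAt
    exact this.eventually hbot
  obtain ⟨ε, hε, hε2⟩ := Metric.eventually_nhds_iff.1 h1
  set a := max 0 (θ0 - ε / 2) with ha
  have haθ : a < θ0 := max_lt hθ0.1 (by linarith)
  have ha0 : 0 ≤ a := le_max_left _ _
  have hA : ∀ θ ∈ Ioc a θ0, u (circleMap c R θ) = ⊥ := by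
    intro θ hθ
    apply hε2
    rw [Real.dist_eq, abs_lt]
    have := le_max_right 0 (θ0 - ε / 2)
    constructor <;> linarith [hθ.1, hθ.2]
  by_contra hne
  have hbound : ∀ n : ℕ, (u c).toReal ≤ (2 * Real.pi)⁻¹ * (2 * Real.pi * B - n * (θ0 - a)) := by
    intro n
    have h2 := sub_le_avg hu hR hc n
    have h3 : ∫ θ in (0:ℝ)..(2 * Real.pi), tr u n (circleMap c R θ) ≤
        ∫ θ in (0:ℝ)..(2 * Real.pi), (B - (Ioc a θ0).indicator (fun _ => (n:ℝ)) θ) := by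
      have hii : IntervalIntegrable (fun θ => (Ioc a θ0).indicator (fun _ => (n:ℝ)) θ) volume 0 (2 * Real.pi) := by
        rw [intervalIntegrable_iff_integrableOn_Ioc_of_le hpi.le]
        exact (integrable_const _).indicator measurableSet_Ioc
      apply intervalIntegral.integral_mono_on hpi.le (tr_circle_int hu hR hc n)
      · exact intervalIntegrable_const.sub hii
      · intro θ _
        by_cases hθ : θ ∈ Ioc a θ0
        · rw [indicator_of_mem hθ, tr_bot (hA θ hθ)]; linarith
        · rw [indicator_of_notMem hθ, sub_zero]; exact hB n _ (hm θ)
    have h4 : ∫ θ in (0:ℝ)..(2 * Real.pi), (B - (Ioc a θ0).indicator (fun _ => (n:ℝ)) θ) =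
        2 * Real.pi * B - n * (θ0 - a) := by
      have hii : IntervalIntegrable (fun θ => (Ioc a θ0).indicator (fun _ => (n:ℝ)) θ) volume 0 (2 * Real.pi) := by
        rw [intervalIntegrable_iff_integrableOn_Ioc_of_le hpi.le]
        exact (integrable_const _).indicator measurableSet_Ioc
      rw [intervalIntegral.integral_sub intervalIntegrable_const hii, intervalIntegral.integral_const,
        intervalIntegral.integral_of_le hpi.le, integral_indicator measurableSet_Ioc,
        Measure.restrict_restrict measurableSet_Ioc]
      have : Ioc a θ0 ∩ Ioc 0 (2 * Real.pi) = Ioc a θ0 := by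
        apply inter_eq_left.2
        exact Ioc_subset_Ioc ha0 hθ0.2
      rw [this, setIntegral_const, smul_eq_mul, Real.volume_real_Ioc_of_le haθ.le]
      simp; ring
    rw [h4] at h3
    have h5 : (((u c).toReal : ℝ) : EReal) ≤ (((2 * Real.pi)⁻¹ * ∫ θ in (0:ℝ)..(2 * Real.pi), tr u n (circleMap c R θ) : ℝ) : EReal) := by
      rw [EReal.coe_toReal (hu.2.1 _ (hc (mem_closedBall_self hR.le))).ne hne]; exact h2
    rw [EReal.coe_le_coe_iff] at h5
    refine h5.trans ?_
    gcongr
  obtain ⟨n, hn⟩ := exists_nat_gt ((2 * Real.pi * B - 2 * Real.pi * (u c).toReal) / (θ0 - a))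
  have := hbound n
  rw [inv_mul_eq_div, le_div_iff₀ hpi] at this
  rw [div_lt_iff₀ (by linarith)] at hn
  linarith

lemma dense_ne_bot {u : ℂ → EReal} {U : Set ℂ} (hU : IsOpen U) (hUc : IsConnected U) (hu : SubharmonicOn u U)
    (hne : ∃ x ∈ U, u x ≠ ⊥) {w : ℂ} (hw : w ∈ U) {V : Set ℂ} (hV : V ∈ 𝓝 w) : ∃ z ∈ V, u z ≠ ⊥ := by
  by_contra hcon
  push Not at hcon
  let S : Set ℂ := {x | ∀ᶠ z in 𝓝 x, u z = ⊥}
  have hS : IsOpen S := isOpen_setOfPred_eventually_nhds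
  have hsub : U ⊆ S := by
    apply hUc.isPreconnected.subset_of_closure_inter_subset hS
    · exact ⟨w, hw, by filter_upwards [hV] with z hz using hcon z hz⟩
    · rintro x ⟨hxS, hxU⟩
      obtain ⟨ε, hε, hε2⟩ := Metric.isOpen_iff.1 hU x hxU
      obtain ⟨g, hgS, hg⟩ := Metric.mem_closure_iff.1 hxS (ε / 4) (by positivity)
      have : ∀ y ∈ ball x (ε / 4), u y = ⊥ := by
        intro y hy
        rw [mem_ball] at hy
        by_cases hyg : y = g
        · rw [hyg]; exact hgS.self_of_nhds
        · refine submean_bot hu (dist_pos.2 (Ne.symm hyg)) ?_ rfl hgS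
          intro t ht
          rw [mem_closedBall] at ht
          apply hε2
          rw [mem_ball]
          have h1 := dist_triangle t y x
          have h2 := dist_triangle g x y
          rw [dist_comm g x, dist_comm x y] at h2
          linarith
      exact Filter.mem_of_superset (ball_mem_nhds x (by positivity : 0 < ε / 4)) this
  obtain ⟨x, hx, hx2⟩ := hne
  exact hx2 (hsub hx).self_of_nhds


lemma off_dist {K : Set ℂ} (hK : IsCompact K) {z : ℂ} (hz : z ∉ K) :
    ∃ η, 0 < η ∧ ∀ ξ ∈ K, η ≤ ‖z - ξ‖ := by
  obtain ⟨η, hη, h⟩ := Metric.isOpen_iff.1 hK.isClosed.isOpen_compl z hz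
  refine ⟨η, hη, fun ξ hξ => ?_⟩
  by_contra hcon
  push Not at hcon
  exact h (by rw [mem_ball, dist_comm, dist_eq_norm]; exact hcon) hξ

lemma lpot_toReal_eq {K : Set ℂ} (hK : IsCompact K) (μ : Measure K) [IsProbabilityMeasure μ] {z : ℂ}
    (hz : z ∉ K) (h1 : ∀ ξ ∈ K, ‖z - ξ‖ ≤ 1) :
    (lpot μ z).toReal = -∫ ξ : K, Real.log ‖z - ξ‖ ∂μ := by
  have hm : Measurable fun ξ : K => Real.log ‖z - ξ‖ := by fun_prop
  rw [← integral_neg, integral_eq_lintegral_of_nonneg_ae]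
  · unfold lpot
    congr 1
    apply lintegral_congr
    intro ξ
    rw [lker_ne]
    intro h
    exact hz (by rw [sub_eq_zero.1 h]; exact ξ.2)
  · refine Eventually.of_forall fun ξ => ?_
    show 0 ≤ -Real.log ‖z - ξ‖
    linarith [Real.log_nonpos (norm_nonneg _) (h1 ξ ξ.2)]
  · exact hm.neg.aestronglyMeasurable

lemma lpot_hasFDerivAt {K : Set ℂ} (hK : IsCompact K) (μ : Measure K) [IsProbabilityMeasure μ] {z : ℂ}
    (hz : z ∉ K) (h1 : ∀ ξ ∈ K, ‖z - ξ‖ ≤ 1/2) :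
    HasFDerivAt (fun z => (lpot μ z).toReal) (-reMulL (∫ ξ : K, (z - ξ)⁻¹ ∂μ)) z := by
  obtain ⟨η, hη, hη2⟩ := off_dist hK hz
  obtain ⟨R, hR⟩ := hK.isBounded.exists_norm_le
  have h2 := (hasFDerivAt_log_integral μ (fun ξ : K => (ξ : ℂ)) measurable_subtype_coe (fun ξ => hR ξ ξ.2) hη
    (fun ξ => hη2 ξ ξ.2)).neg
  refine h2.congr_of_eventuallyEq ?_
  have hop := hK.isClosed.isOpen_compl.mem_nhds hz
  filter_upwards [hop, ball_mem_nhds z (show (0:ℝ) < 1/2 by norm_num)] with y hy hy2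
  rw [lpot_toReal_eq hK μ hy]
  · rfl
  · intro ξ hξ
    have := h1 ξ hξ
    rw [mem_ball, dist_eq_norm] at hy2
    linarith [norm_sub_le_norm_sub_add_norm_sub y z ξ]

lemma sq_circle (p w : ℂ) (r : ℝ) :
    ∫ θ in (0:ℝ)..(2 * Real.pi), ‖circleMap p r θ - w‖ ^ 2 = 2 * Real.pi * (‖p - w‖ ^ 2 + r ^ 2) := by
  have h : ∀ θ : ℝ, ‖circleMap p r θ - w‖ ^ 2 = (‖p - w‖ ^ 2 + r ^ 2) +
      ((2 * r * (p - w).re) * Real.cos θ + (2 * r * (p - w).im) * Real.sin θ) := by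
    intro θ
    rw [← Complex.normSq_eq_norm_sq, ← Complex.normSq_eq_norm_sq, Complex.normSq_apply, Complex.normSq_apply]
    have hre : (circleMap p r θ - w).re = (p - w).re + r * Real.cos θ := by
      simp [circleMap, Complex.exp_ofReal_mul_I_re]; ring
    have him : (circleMap p r θ - w).im = (p - w).im + r * Real.sin θ := by
      simp [circleMap, Complex.exp_ofReal_mul_I_im]; ring
    rw [hre, him]
    have := Real.sin_sq_add_cos_sq θ
    linear_combination r ^ 2 * this
  simp_rw [h]
  rw [intervalIntegral.integral_add (by simp) (Continuous.intervalIntegrable (by fun_prop) _ _),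
    intervalIntegral.integral_add (Continuous.intervalIntegrable (by fun_prop) _ _) (Continuous.intervalIntegrable (by fun_prop) _ _)]
  simp
  ring

theorem no_bdd_pot {U : Set ℂ} {u : ℂ → EReal} (hU : IsOpen U) (hUc : IsConnected U) (hu : SubharmonicOn u U)
    (hne : ∃ x ∈ U, u x ≠ ⊥) {w : ℂ} {ρ : ℝ} (hρ : 0 < ρ) (hρ4 : ρ ≤ 1/4) (hρU : closedBall w ρ ⊆ U)
    {K : Set ℂ} (hK : IsCompact K) (hKne : K.Nonempty) (hKw : K ⊆ closedBall w (ρ / 4))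
    (huK : ∀ z ∈ K, u z = ⊥) (μ : Measure K) [IsProbabilityMeasure μ] {C : ℝ}
    (hC : ∀ x : K, lpot μ x ≤ ENNReal.ofReal C) : False := by
  classical
  have hpi : (0:ℝ) < 2 * Real.pi := by positivity
  obtain ⟨z1, hz1, hz1u⟩ := dense_ne_bot hU hUc hu hne (hρU (mem_closedBall_self hρ.le))
    (ball_mem_nhds w (show 0 < ρ / 4 by positivity))
  have hz1K : z1 ∉ K := fun h => hz1u (huK z1 h)
  obtain ⟨B, hB0, hB⟩ := tr_bdd hu (isCompact_closedBall w ρ) hρU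
  set M : ℝ := max C 0 + Real.log 2 with hM
  have hlog2 : 0 ≤ Real.log 2 := Real.log_nonneg (by norm_num)
  have hM0 : 0 ≤ M := by have := le_max_right C 0; positivity
  have hlM : ∀ z, lpot μ z ≤ ENNReal.ofReal M := by
    intro z
    refine (lpot_bdd hK hKne μ hC z).trans ?_
    rw [hM, ENNReal.ofReal_add (le_max_right _ _) hlog2]
    gcongr
    exact le_max_left _ _
  have hlfin : ∀ z, lpot μ z ≠ ⊤ := fun z => ((hlM z).trans_lt ENNReal.ofReal_lt_top).ne
  let P : ℂ → ℝ := fun z => if z ∈ K then M else (lpot μ z).toReal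
  have hPM : ∀ z, P z ≤ M := by
    intro z
    by_cases h : z ∈ K
    · simp [P, h]
    · simp only [P, h, if_false]
      exact ENNReal.toReal_le_of_le_ofReal hM0 (hlM z)
  have hPoff : ∀ z, z ∉ K → P z = (lpot μ z).toReal := fun z h => by simp [P, h]
  have hdist : ∀ z ∈ closedBall w ρ, ∀ ξ ∈ K, ‖z - ξ‖ ≤ 1/2 := by
    intro z hz ξ hξ
    have h2 := hKw hξ
    rw [mem_closedBall, dist_eq_norm] at hz h2
    have := norm_sub_le_norm_sub_add_norm_sub z w ξ
    rw [norm_sub_rev w ξ] at this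
    linarith
  have hPusc : UpperSemicontinuousOn P (closedBall w ρ) := by
    intro x hx y hy
    by_cases h : x ∈ K
    · have : M < y := by simpa [P, h] using hy
      exact Eventually.of_forall fun z => (hPM z).trans_lt this
    · have hc := (lpot_hasFDerivAt hK μ h (hdist x hx)).continuousAt
      rw [hPoff x h] at hy
      have h2 := hc.eventually (gt_mem_nhds hy)
      apply mem_nhdsWithin_of_mem_nhds
      filter_upwards [h2, hK.isClosed.isOpen_compl.mem_nhds h] with z hz1 hz2
      rw [hPoff z hz2]; exact hz1
  have hlow : -Real.log (ρ / 2) ≤ P z1 := by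
    rw [hPoff z1 hz1K]
    have h1 : ENNReal.ofReal (-Real.log (ρ / 2)) ≤ lpot μ z1 := by
      apply lpot_ge_of_dist
      intro ξ hξ
      have h2 := hKw hξ
      rw [mem_closedBall, dist_eq_norm] at h2
      rw [mem_ball, dist_eq_norm] at hz1
      have := norm_sub_le_norm_sub_add_norm_sub z1 w ξ
      rw [norm_sub_rev w ξ] at this
      linarith
    exact (ENNReal.ofReal_le_iff_le_toReal (hlfin z1)).1 h1
  set m := (u z1).toReal with hm
  have hz1U : z1 ∈ U := hρU (ball_subset_closedBall (ball_subset_ball (by linarith) hz1))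
  obtain ⟨ε, hε, hε2⟩ : ∃ ε : ℝ, 0 < ε ∧ ε * (B + ρ ^ 2 - m) < Real.log (3 / 2) := by
    have hl : 0 < Real.log (3 / 2) := Real.log_pos (by norm_num)
    refine ⟨Real.log (3 / 2) / (|B + ρ ^ 2 - m| + 1), by positivity, ?_⟩
    rw [div_mul_eq_mul_div, div_lt_iff₀ (by positivity)]
    have := le_abs_self (B + ρ ^ 2 - m)
    nlinarith
  obtain ⟨n, hn⟩ := exists_nat_gt ((M + ε * ρ ^ 2 + Real.log (ρ / 2) - ε * m) / ε)
  rw [div_lt_iff₀ hε] at hn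
  have hlogs : Real.log (3 * ρ / 4) = Real.log (3 / 2) + Real.log (ρ / 2) := by
    rw [← Real.log_mul (by norm_num) (by positivity)]; congr 1; ring
  let h : ℂ → ℝ := fun z => P z + (ε * tr u n z + ε * ‖z - w‖ ^ 2)
  have htrc : UpperSemicontinuousOn (fun z => ε * tr u n z + ε * ‖z - w‖ ^ 2) (closedBall w ρ) := by
    apply UpperSemicontinuousOn.add
    · intro x hx y hy
      have h1 : tr u n x < y / ε := by rw [lt_div_iff₀ hε]; linarith
      filter_upwards [(tr_usc hu n).mono hρU x hx _ h1] with z hz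
      rw [lt_div_iff₀ hε] at hz; linarith
    · apply ContinuousOn.upperSemicontinuousOn
      fun_prop
  have husc : UpperSemicontinuousOn h (closedBall w ρ) := hPusc.add htrc
  obtain ⟨p, hp, hpmax⟩ := husc.exists_isMaxOn ⟨w, mem_closedBall_self hρ.le⟩ (isCompact_closedBall w ρ)
  have hz1h : -Real.log (ρ / 2) + ε * m ≤ h p := by
    refine le_trans ?_ (hpmax (show z1 ∈ closedBall w ρ from ball_subset_closedBall (ball_subset_ball (by linarith) hz1)))
    have h1 := mul_le_mul_of_nonneg_left (toReal_le_tr (hu.2.1 z1 hz1U) hz1u n) hε.le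
    have h2 : 0 ≤ ε * ‖z1 - w‖ ^ 2 := by positivity
    simp only [h]
    linarith
  have hpw : ‖p - w‖ ≤ ρ := by rwa [mem_closedBall, dist_eq_norm] at hp
  have hpw2 : ε * ‖p - w‖ ^ 2 ≤ ε * ρ ^ 2 := by gcongr
  by_cases hpK : p ∈ K
  · have : h p = M + (ε * (-n) + ε * ‖p - w‖ ^ 2) := by simp [h, P, hpK, tr_bot (huK p hpK)]
    rw [this] at hz1h
    linarith
  by_cases hpρ : ‖p - w‖ = ρ
  · have h1 : P p ≤ -Real.log (3 * ρ / 4) := by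
      rw [hPoff p hpK]
      apply ENNReal.toReal_le_of_le_ofReal
      · have : Real.log (3 * ρ / 4) ≤ 0 := Real.log_nonpos (by positivity) (by linarith)
        linarith
      apply lpot_le_of_dist μ (by positivity)
      intro ξ hξ
      have h2 := hKw hξ
      rw [mem_closedBall, dist_eq_norm] at h2
      have := norm_sub_le_norm_sub_add_norm_sub p ξ w
      linarith
    have h2 := mul_le_mul_of_nonneg_left (hB n p hp) hε.le
    simp only [h] at hz1h
    nlinarith
  · have hplt : ‖p - w‖ < ρ := lt_of_le_of_ne hpw hpρ
    obtain ⟨η, hη, hη2⟩ := off_dist hK hpK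
    set r := min (η / 2) (ρ - ‖p - w‖) with hr
    have hr0 : 0 < r := lt_min (by positivity) (by linarith)
    have hrη : r < η := (min_le_left _ _).trans_lt (by linarith)
    have hrρ : r ≤ ρ - ‖p - w‖ := min_le_right _ _
    have hball : closedBall p r ⊆ closedBall w ρ := by
      apply closedBall_subset_closedBall'
      rw [dist_eq_norm]; linarith
    have hoff : ∀ z ∈ closedBall p r, z ∉ K := by
      intro z hz hzK
      have := hη2 z hzK
      rw [mem_closedBall, dist_eq_norm, norm_sub_rev] at hz
      linarith
    have hmem : ∀ θ, circleMap p r θ ∈ closedBall p r := fun θ => circleMap_mem_closedBall p hr0.le θ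
    have hPint : IntervalIntegrable (fun θ => P (circleMap p r θ)) volume 0 (2 * Real.pi) := by
      apply ContinuousOn.intervalIntegrable
      intro θ _
      apply ContinuousAt.continuousWithinAt
      have hc := (lpot_hasFDerivAt hK μ (hoff _ (hmem θ)) (hdist _ (hball (hmem θ)))).continuousAt
      have h2 : ContinuousAt (fun θ => (lpot μ (circleMap p r θ)).toReal) θ :=
        ContinuousAt.comp (f := circleMap p r) (g := fun z => (lpot μ z).toReal) hc (continuous_circleMap p r).continuousAt
      refine h2.congr (Eventually.of_forall fun t => ?_)
      exact (hPoff _ (hoff _ (hmem t))).symm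
    have hPavg : ∫ θ in (0:ℝ)..(2 * Real.pi), P (circleMap p r θ) = 2 * Real.pi * P p := by
      have h1 := lpot_circle_eq μ p hr0 (fun ξ hξ => by
        have := hdist p hp ξ hξ
        have : 0 ≤ ‖p - w‖ := norm_nonneg _
        linarith) (fun ξ hξ => by linarith [hη2 ξ hξ])
      have h2 : ∀ θ, P (circleMap p r θ) = (lpot μ (circleMap p r θ)).toReal := fun θ => hPoff _ (hoff _ (hmem θ))
      simp_rw [h2]
      rw [intervalIntegral.integral_of_le hpi.le, integral_toReal, h1, ENNReal.toReal_mul,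
        ENNReal.toReal_ofReal hpi.le, hPoff p hpK]
      · exact ((lpot_meas μ).comp (continuous_circleMap p r).measurable).aemeasurable
      · exact Eventually.of_forall fun θ => (hlfin _).lt_top
    have htrint := tr_circle_int hu hr0 (hball.trans hρU) n
    have htr := tr_submean hu hr0 (hball.trans hρU) n
    have hsqint : IntervalIntegrable (fun θ => ‖circleMap p r θ - w‖ ^ 2) volume 0 (2 * Real.pi) :=
      Continuous.intervalIntegrable (by fun_prop) _ _
    have htot : ∫ θ in (0:ℝ)..(2 * Real.pi), h (circleMap p r θ) =
        (∫ θ in (0:ℝ)..(2 * Real.pi), P (circleMap p r θ)) +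
        (ε * (∫ θ in (0:ℝ)..(2 * Real.pi), tr u n (circleMap p r θ)) +
          ε * ∫ θ in (0:ℝ)..(2 * Real.pi), ‖circleMap p r θ - w‖ ^ 2) := by
      simp only [h]
      rw [intervalIntegral.integral_add hPint ((htrint.const_mul _).add (hsqint.const_mul _)),
        intervalIntegral.integral_add (htrint.const_mul _) (hsqint.const_mul _),
        intervalIntegral.integral_const_mul, intervalIntegral.integral_const_mul]
    have hle : ∫ θ in (0:ℝ)..(2 * Real.pi), h (circleMap p r θ) ≤ 2 * Real.pi * h p := by
      have : ∫ θ in (0:ℝ)..(2 * Real.pi), h p = 2 * Real.pi * h p := by simp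
      rw [← this]
      apply intervalIntegral.integral_mono_on hpi.le
      · exact hPint.add ((htrint.const_mul _).add (hsqint.const_mul _))
      · simp
      · intro θ _
        exact hpmax (hball (hmem θ))
    rw [htot, hPavg, sq_circle] at hle
    have h3 := mul_le_mul_of_nonneg_left htr hε.le
    have h4 : 0 < 2 * Real.pi * (ε * r ^ 2) := by positivity
    simp only [h] at hle
    nlinarith


noncomputable def rectInt (f : ℂ → ℂ) (a b c d : ℝ) : ℂ :=
  (∫ x : ℝ in a..b, f (x + c * Complex.I)) - (∫ x : ℝ in a..b, f (x + d * Complex.I)) +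
      Complex.I * (∫ y : ℝ in c..d, f (b + y * Complex.I)) -
      Complex.I * (∫ y : ℝ in c..d, f (a + y * Complex.I))

def rbox (a b c d : ℝ) : Set ℂ := Icc a b ×ℂ Icc c d

lemma isCompact_rbox (a b c d : ℝ) : IsCompact (rbox a b c d) := isCompact_Icc.reProdIm isCompact_Icc

lemma rect_iter (G : ℂ → ℂ) {a b c d : ℝ} (hab : a ≤ b) (hcd : c ≤ d) (hG : IntegrableOn G (rbox a b c d)) :
    ∫ x : ℝ in a..b, ∫ y : ℝ in c..d, G (x + y * Complex.I) = ∫ z in rbox a b c d, G z := by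
  have hmp := Complex.volume_preserving_equiv_real_prod
  have hmp' := hmp.symm
  have hpre : Complex.measurableEquivRealProd.symm ⁻¹' (rbox a b c d) = Icc a b ×ˢ Icc c d := by
    ext p; simp [rbox, Complex.mem_reProdIm, Prod.le_def]; tauto
  have h1 : ∫ z in rbox a b c d, G z = ∫ p in Icc a b ×ˢ Icc c d, G (Complex.measurableEquivRealProd.symm p) := by
    rw [← hpre]
    exact (hmp'.setIntegral_preimage_emb Complex.measurableEquivRealProd.symm.measurableEmbedding G _).symm
  have h2 : IntegrableOn (fun p => G (Complex.measurableEquivRealProd.symm p)) (Icc a b ×ˢ Icc c d) := by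
    rw [← hpre]
    exact (hmp'.integrableOn_comp_preimage Complex.measurableEquivRealProd.symm.measurableEmbedding).2 hG
  rw [h1, Measure.volume_eq_prod, setIntegral_prod _ h2, intervalIntegral.integral_of_le hab, integral_Icc_eq_integral_Ioc]
  apply setIntegral_congr_fun measurableSet_Ioc
  intro x _
  simp only
  rw [intervalIntegral.integral_of_le hcd, integral_Icc_eq_integral_Ioc]
  apply setIntegral_congr_fun measurableSet_Ioc
  intro y _
  simp only
  congr 1
  apply Complex.ext <;> simp

noncomputable def cpot {K : Set ℂ} (μ : Measure K) (z : ℂ) : ℂ := ∫ ξ : K, (z - ξ)⁻¹ ∂μ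

lemma cpot_diff {K : Set ℂ} (hK : IsCompact K) (μ : Measure K) [IsProbabilityMeasure μ] {z : ℂ}
    (hz : z ∉ K) : DifferentiableAt ℂ (cpot μ) z := by
  obtain ⟨η, hη, hη2⟩ := off_dist hK hz
  have := hasDerivAt_cauchy_pow μ (fun ξ : K => (ξ : ℂ)) measurable_subtype_coe.aemeasurable (fun _ => 1)
    (integrable_const _) hη (fun ξ => hη2 ξ ξ.2)
  simp only [one_mul] at this
  exact this.differentiableAt

open Classical in
lemma green {K : Set ℂ} (hK : IsCompact K) (ν : Measure K) [IsProbabilityMeasure ν] (hν : ∀ x : K, lpot ν x = ⊤)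
    {a b c d : ℝ} (hab : a < b) (hcd : c < d) (hR : ∀ z ∈ rbox a b c d, ∀ ξ ∈ K, ‖z - ξ‖ ≤ 1/2)
    {α α' : ℝ → ℝ} (hα : ∀ t, HasDerivAt α (α' t) t) (hα' : Continuous α') {T0 T1 k : ℝ}
    (hT0 : ∀ t ≤ T0, α t = k) (hT1 : ∀ t, T1 ≤ t → α t = 0) (hT1' : ∀ t, T1 ≤ t → α' t = 0)
    (hΓ : ∀ z ∈ rbox a b c d, (z.re = a ∨ z.re = b ∨ z.im = c ∨ z.im = d) → z ∉ K ∧ (lpot ν z).toReal ≤ T0)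
    (h : ℂ → ℂ) (hh : ∀ z ∈ rbox a b c d, z ∉ K → DifferentiableAt ℂ h z) :
    let G : ℂ → ℂ := fun z => if z ∈ K then 0 else
      -Complex.I * (α' (lpot ν z).toReal : ℝ) * h z * (starRingEnd ℂ) (cpot ν z)
    IntegrableOn G (rbox a b c d) ∧ (k : ℂ) * rectInt h a b c d = ∫ z in rbox a b c d, G z := by
  intro G
  have hnear : ∀ ξ ∈ K, ∀ᶠ z in 𝓝 ξ, z ∉ K → T1 ≤ (lpot ν z).toReal := by
    intro ξ hξ
    have h1 := lpot_lsc ν ξ (ENNReal.ofReal T1) (by show ENNReal.ofReal T1 < lpot ν ξ; rw [hν ⟨ξ, hξ⟩]; exact ENNReal.ofReal_lt_top)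
    filter_upwards [h1] with z hz hzK
    exact (ENNReal.ofReal_le_iff_le_toReal (lpot_lt_top_off hK ν hzK).ne).1 hz.le
  have hGc : ∀ z ∈ rbox a b c d, ContinuousAt G z := by
    intro z hz
    by_cases hzK : z ∈ K
    · have : G =ᶠ[𝓝 z] fun _ => 0 := by
        filter_upwards [hnear z hzK] with y hy
        by_cases hyK : y ∈ K
        · simp [G, hyK]
        · simp [G, hyK, hT1' _ (hy hyK)]
      exact (continuousAt_const.congr this.symm)
    · have : G =ᶠ[𝓝 z] fun z => -Complex.I * (α' (lpot ν z).toReal : ℝ) * h z * (starRingEnd ℂ) (cpot ν z) := by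
        filter_upwards [hK.isClosed.isOpen_compl.mem_nhds hzK] with y hy
        simp only [G]
        rw [if_neg hy]
      refine ContinuousAt.congr ?_ this.symm
      have h1 : ContinuousAt (fun z => (lpot ν z).toReal) z := (lpot_hasFDerivAt hK ν hzK (hR z hz)).continuousAt
      have h2 : ContinuousAt (fun z => ((α' (lpot ν z).toReal : ℝ) : ℂ)) z :=
        Complex.continuous_ofReal.continuousAt.comp (hα'.continuousAt.comp h1)
      exact ((continuousAt_const.mul h2).mul (hh z hz hzK).continuousAt).mul
        (Complex.continuous_conj.continuousAt.comp (cpot_diff hK ν hzK).continuousAt)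
  have hGi : IntegrableOn G (rbox a b c d) :=
    ContinuousOn.integrableOn_compact (isCompact_rbox a b c d) fun z hz => (hGc z hz).continuousWithinAt
  refine ⟨hGi, ?_⟩
  let F : ℂ → ℂ := fun z => if z ∈ K then 0 else (α (lpot ν z).toReal : ℝ) * h z
  let F' : ℂ → (ℂ →L[ℝ] ℂ) := fun z => if z ∈ K then 0 else
    (((α (lpot ν z).toReal : ℝ) : ℂ)) • ((fderiv ℂ h z).restrictScalars ℝ) +
      (h z) • (Complex.ofRealCLM.comp (α' (lpot ν z).toReal • (-reMulL (cpot ν z))))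
  have hFd : ∀ z ∈ rbox a b c d, HasFDerivAt F (F' z) z := by
    intro z hz
    by_cases hzK : z ∈ K
    · have : F =ᶠ[𝓝 z] fun _ => 0 := by
        filter_upwards [hnear z hzK] with y hy
        by_cases hyK : y ∈ K
        · simp [F, hyK]
        · simp [F, hyK, hT1 _ (hy hyK)]
      have h2 : F' z = 0 := by simp [F', hzK]
      rw [h2]
      exact (hasFDerivAt_const (0:ℂ) z).congr_of_eventuallyEq this
    · have : F =ᶠ[𝓝 z] fun z => ((α (lpot ν z).toReal : ℝ) : ℂ) * h z := by
        filter_upwards [hK.isClosed.isOpen_compl.mem_nhds hzK] with y hy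
        simp only [F]
        rw [if_neg hy]
      have h1 := lpot_hasFDerivAt hK ν hzK (hR z hz)
      have h2 := (hα (lpot ν z).toReal).comp_hasFDerivAt z h1
      have h3 := Complex.ofRealCLM.hasFDerivAt.comp z h2
      have h4 := ((hh z hz hzK).hasFDerivAt.restrictScalars ℝ)
      have h5 := h3.mul h4
      have h6 : F' z = _ := if_neg hzK
      rw [h6]
      exact h5.congr_of_eventuallyEq this
  have hkey : ∀ z, Complex.I • F' z 1 - F' z Complex.I = G z := by
    intro z
    by_cases hzK : z ∈ K
    · simp [F', G, hzK]
    · have h6 : F' z = _ := if_neg hzK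
      have h7 : G z = _ := if_neg hzK
      rw [h6, h7]
      have hlin : fderiv ℂ h z Complex.I = Complex.I * fderiv ℂ h z 1 := by
        rw [← smul_eq_mul, ← map_smul]; simp
      simp only [add_apply, smul_apply, ContinuousLinearMap.coe_restrictScalars',
        ContinuousLinearMap.comp_apply, neg_apply, reMulL_apply, smul_eq_mul, hlin, Complex.ofRealCLM_apply]
      apply Complex.ext <;> simp <;> ring
  have hmain := Complex.integral_boundary_rect_of_continuousOn_of_hasFDerivAt_real F F' ⟨a, c⟩ ⟨b, d⟩
    (by
      simp only [uIcc_of_le hab.le, uIcc_of_le hcd.le]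
      exact fun z hz => (hFd z hz).continuousAt.continuousWithinAt)
    (by
      simp only [min_eq_left hab.le, min_eq_left hcd.le, max_eq_right hab.le, max_eq_right hcd.le]
      exact fun z hz => hFd z ⟨Ioo_subset_Icc_self hz.1, Ioo_subset_Icc_self hz.2⟩)
    (by
      simp only [uIcc_of_le hab.le, uIcc_of_le hcd.le, hkey]
      exact hGi)
  simp only [hkey] at hmain
  rw [rect_iter G hab.le hcd.le hGi] at hmain
  rw [← hmain]
  have hFΓ : ∀ z ∈ rbox a b c d, (z.re = a ∨ z.re = b ∨ z.im = c ∨ z.im = d) → F z = k * h z := by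
    intro z hz hz2
    obtain ⟨h1, h2⟩ := hΓ z hz hz2
    simp only [F]
    rw [if_neg h1, hT0 _ h2]
  have e1 : ∀ y, (y = c ∨ y = d) → ∫ x : ℝ in a..b, F (x + y * Complex.I) = k * ∫ x : ℝ in a..b, h (x + y * Complex.I) := by
    intro y hy
    rw [← intervalIntegral.integral_const_mul]
    apply intervalIntegral.integral_congr
    intro x hx
    rw [uIcc_of_le hab.le] at hx
    apply hFΓ
    · rw [rbox, Complex.mem_reProdIm]
      rcases hy with rfl | rfl <;> simp [hx.1, hx.2, hcd.le]
    · simp [hy]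
  have e2 : ∀ x, (x = a ∨ x = b) → ∫ y : ℝ in c..d, F (x + y * Complex.I) = k * ∫ y : ℝ in c..d, h (x + y * Complex.I) := by
    intro x hx
    rw [← intervalIntegral.integral_const_mul]
    apply intervalIntegral.integral_congr
    intro y hy
    rw [uIcc_of_le hcd.le] at hy
    apply hFΓ
    · rw [rbox, Complex.mem_reProdIm]
      rcases hx with rfl | rfl <;> simp [hy.1, hy.2, hab.le]
    · rcases hx with rfl | rfl <;> simp
  simp only [smul_eq_mul]
  rw [e1 c (Or.inl rfl), e1 d (Or.inr rfl), e2 a (Or.inl rfl), e2 b (Or.inr rfl), rectInt]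
  ring


open Classical in
lemma green_beta {K : Set ℂ} (hK : IsCompact K) (ν : Measure K) [IsProbabilityMeasure ν] (hν : ∀ x : K, lpot ν x = ⊤)
    {a b c d : ℝ} (hab : a < b) (hcd : c < d) (hR : ∀ z ∈ rbox a b c d, ∀ ξ ∈ K, ‖z - ξ‖ ≤ 1/2)
    {β : ℝ → ℝ} (hβ : Continuous β) {T0 T1 : ℝ} (hT0 : ∀ t ≤ T0, β t = 0) (hT1 : ∀ t, T1 ≤ t → β t = 0)
    (hΓ : ∀ z ∈ rbox a b c d, (z.re = a ∨ z.re = b ∨ z.im = c ∨ z.im = d) → z ∉ K ∧ (lpot ν z).toReal ≤ T0)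
    (h : ℂ → ℂ) (hh : ∀ z ∈ rbox a b c d, z ∉ K → DifferentiableAt ℂ h z) :
    let G : ℂ → ℂ := fun z => if z ∈ K then 0 else
      Complex.I * (β (lpot ν z).toReal : ℝ) * h z * (starRingEnd ℂ) (cpot ν z)
    IntegrableOn G (rbox a b c d) ∧
      ((∫ t in T0..T1, β t : ℝ) : ℂ) * rectInt h a b c d = ∫ z in rbox a b c d, G z := by
  intro G
  have hi : ∀ x y, IntervalIntegrable β volume x y := fun x y => hβ.intervalIntegrable x y
  have h1 := green hK ν hν hab hcd hR (α := fun t => ∫ s in t..T1, β s) (α' := fun t => -β t)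
    (fun t => by
      exact intervalIntegral.integral_hasDerivAt_left (hi t T1) (hβ.stronglyMeasurableAtFilter _ _) hβ.continuousAt)
    hβ.neg (T0 := T0) (T1 := T1) (k := ∫ t in T0..T1, β t)
    (fun t ht => by
      have : ∫ s in t..T0, β s = 0 := by
        apply intervalIntegral.integral_zero_ae
        refine Eventually.of_forall fun x hx => ?_
        rw [uIoc_of_le ht] at hx
        exact hT0 x hx.2
      have h2 := intervalIntegral.integral_add_adjacent_intervals (hi t T0) (hi T0 T1)
      show ∫ s in t..T1, β s = _
      rw [← h2, this, zero_add])
    (fun t ht => by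
      apply intervalIntegral.integral_zero_ae
      refine Eventually.of_forall fun x hx => ?_
      rw [uIoc_of_ge ht] at hx
      exact hT1 x hx.1.le)
    (fun t ht => by rw [hT1 t ht, neg_zero]) hΓ h hh
  have hGG : G = fun z => if z ∈ K then 0 else
      -Complex.I * ((-β (lpot ν z).toReal : ℝ) : ℂ) * h z * (starRingEnd ℂ) (cpot ν z) := by
    ext z
    by_cases hz : z ∈ K
    · simp [G, hz]
    · simp [G, hz]
  rw [hGG]
  exact h1

noncomputable def bta (T0 N t : ℝ) : ℝ := max 0 (min 1 (min (t - T0) (T0 + N + 2 - t)))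

lemma bta_cont (T0 N : ℝ) : Continuous (bta T0 N) := by unfold bta; fun_prop
lemma bta_nonneg (T0 N t : ℝ) : 0 ≤ bta T0 N t := le_max_left _ _
lemma bta_le_one (T0 N t : ℝ) : bta T0 N t ≤ 1 := max_le zero_le_one (min_le_left _ _)
lemma bta_left (T0 N t : ℝ) (h : t ≤ T0) : bta T0 N t = 0 := by
  apply max_eq_left
  exact (min_le_right _ _).trans ((min_le_left _ _).trans (by linarith))
lemma bta_right (T0 N t : ℝ) (h : T0 + N + 2 ≤ t) : bta T0 N t = 0 := by
  apply max_eq_left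
  exact (min_le_right _ _).trans ((min_le_right _ _).trans (by linarith))
lemma bta_int (T0 N : ℝ) (hN : 0 ≤ N) : N ≤ ∫ t in T0..(T0 + N + 2), bta T0 N t := by
  have hi : ∀ x y, IntervalIntegrable (bta T0 N) volume x y := fun x y => (bta_cont T0 N).intervalIntegrable x y
  have h2 : ∫ t in (T0+1)..(T0+N+1), bta T0 N t ≤ ∫ t in T0..(T0 + N + 2), bta T0 N t := by
    apply intervalIntegral.integral_mono_interval (by linarith) (by linarith) (by linarith)
    · exact Eventually.of_forall fun t => bta_nonneg _ _ _
    · exact hi _ _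
  refine le_trans ?_ h2
  have h3 : ∫ t in (T0+1)..(T0+N+1), (1:ℝ) = N := by simp
  refine h3.symm.le.trans ?_
  apply intervalIntegral.integral_mono_on (by linarith) (by simp) (hi _ _)
  rintro t ⟨h1, h2⟩
  refine le_trans ?_ (le_max_right _ _)
  refine le_min le_rfl (le_min (by linarith) (by linarith))

theorem rect_zero {K : Set ℂ} (hK : IsCompact K) (ν : Measure K) [IsProbabilityMeasure ν] (hν : ∀ x : K, lpot ν x = ⊤)
    {a b c d : ℝ} (hab : a < b) (hcd : c < d) (hR : ∀ z ∈ rbox a b c d, ∀ ξ ∈ K, ‖z - ξ‖ ≤ 1/2)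
    (hΓ : ∀ z ∈ rbox a b c d, (z.re = a ∨ z.re = b ∨ z.im = c ∨ z.im = d) → z ∉ K)
    (f : ℂ → ℂ) (hf : ∀ z ∈ rbox a b c d, z ∉ K → DifferentiableAt ℂ f z)
    (hf2 : IntegrableOn (fun z => ‖f z‖ ^ 2) (rbox a b c d \ K)) : rectInt f a b c d = 0 := by
  classical
  let Γ : Set ℂ := rbox a b c d ∩ {z | z.re = a ∨ z.re = b ∨ z.im = c ∨ z.im = d}
  have hΓc : IsCompact Γ := by
    apply (isCompact_rbox a b c d).inter_right
    have h1 : IsClosed {z : ℂ | z.re = a} := isClosed_eq Complex.continuous_re continuous_const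
    have h2 : IsClosed {z : ℂ | z.re = b} := isClosed_eq Complex.continuous_re continuous_const
    have h3 : IsClosed {z : ℂ | z.im = c} := isClosed_eq Complex.continuous_im continuous_const
    have h4 : IsClosed {z : ℂ | z.im = d} := isClosed_eq Complex.continuous_im continuous_const
    exact h1.union (h2.union (h3.union h4))
  have hbdd : BddAbove ((fun z => (lpot ν z).toReal) '' Γ) := by
    apply hΓc.bddAbove_image
    intro z hz
    exact (lpot_hasFDerivAt hK ν (hΓ z hz.1 hz.2) (hR z hz.1)).continuousAt.continuousWithinAt
  obtain ⟨T0, hT0⟩ := hbdd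
  have hΓ' : ∀ z ∈ rbox a b c d, (z.re = a ∨ z.re = b ∨ z.im = c ∨ z.im = d) → z ∉ K ∧ (lpot ν z).toReal ≤ T0 :=
    fun z hz hz2 => ⟨hΓ z hz hz2, hT0 ⟨z, ⟨hz, hz2⟩, rfl⟩⟩
  set A := ‖rectInt (cpot ν) a b c d‖ with hA
  set E := ∫ z in rbox a b c d \ K, ‖f z‖ ^ 2 with hE
  have hmeas : MeasurableSet (rbox a b c d \ K) := (isCompact_rbox a b c d).isClosed.measurableSet.diff hK.isClosed.measurableSet
  have hmb : MeasurableSet (rbox a b c d) := (isCompact_rbox a b c d).isClosed.measurableSet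
  have key : ∀ N : ℝ, 0 < N → ∀ l : ℝ, 0 < l → ‖rectInt f a b c d‖ ≤ (l * A + E / (l * N)) := by
    intro N hN l hl
    set k1 := ∫ t in T0..(T0 + N + 2), bta T0 N t with hk1
    set k2 := ∫ t in T0..(T0 + N + 2), (bta T0 N t) ^ 2 with hk2
    have hk1N : N ≤ k1 := bta_int T0 N hN.le
    have hk1p : 0 < k1 := hN.trans_le hk1N
    have hk2n : 0 ≤ k2 := intervalIntegral.integral_nonneg (by linarith) fun t _ => sq_nonneg _
    have hk21 : k2 ≤ k1 := by
      apply intervalIntegral.integral_mono_on (by linarith)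
      · exact ((bta_cont T0 N).pow 2).intervalIntegrable _ _
      · exact (bta_cont T0 N).intervalIntegrable _ _
      · intro t _
        have := bta_nonneg T0 N t
        have := bta_le_one T0 N t
        nlinarith
    obtain ⟨i1, e1⟩ := green_beta hK ν hν hab hcd hR (β := fun t => (bta T0 N t) ^ 2) ((bta_cont T0 N).pow 2)
      (T0 := T0) (T1 := T0 + N + 2) (fun t ht => by simp [bta_left T0 N t ht]) (fun t ht => by simp [bta_right T0 N t ht])
      hΓ' (cpot ν) (fun z _ hz => cpot_diff hK ν hz)
    obtain ⟨i2, e2⟩ := green_beta hK ν hν hab hcd hR (bta_cont T0 N)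
      (T0 := T0) (T1 := T0 + N + 2) (bta_left T0 N) (bta_right T0 N) hΓ' f hf
    rw [← hk2] at e1
    rw [← hk1] at e2
    let G1 : ℂ → ℝ := fun z => if z ∈ K then 0 else (bta T0 N (lpot ν z).toReal) ^ 2 * ‖cpot ν z‖ ^ 2
    have hG1 : ∀ z, (if z ∈ K then 0 else Complex.I * (((bta T0 N (lpot ν z).toReal) ^ 2 : ℝ) : ℂ) * cpot ν z *
        (starRingEnd ℂ) (cpot ν z)) = Complex.I * (G1 z : ℝ) := by
      intro z
      by_cases hz : z ∈ K
      · simp [G1, hz]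
      · simp only [G1, hz, if_false]
        rw [mul_assoc, Complex.mul_conj, Complex.normSq_eq_norm_sq]
        push_cast; ring
    simp only [hG1] at i1 e1
    have i1' : IntegrableOn G1 (rbox a b c d) := by
      have h3 := (i1.const_mul (-Complex.I)).re
      refine h3.congr (Eventually.of_forall fun z => ?_)
      simp
    have e1' : ∫ z in rbox a b c d, G1 z = k2 * A := by
      rw [integral_const_mul, integral_complex_ofReal] at e1
      have h4 := congrArg norm e1
      have h5 : 0 ≤ ∫ z in rbox a b c d, G1 z := by
        apply integral_nonneg
        intro z
        by_cases hz : z ∈ K <;> simp [G1, hz]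
        positivity
      rw [norm_mul, norm_mul, Complex.norm_I, one_mul, Complex.norm_real, Complex.norm_real,
        Real.norm_of_nonneg hk2n, Real.norm_of_nonneg h5] at h4
      exact h4.symm
    let H : ℂ → ℝ := (rbox a b c d \ K).indicator (fun z => ‖f z‖ ^ 2)
    have iH : IntegrableOn H (rbox a b c d) := by
      exact (integrable_indicator_iff hmeas).2 hf2 |>.integrableOn
    have eH : ∫ z in rbox a b c d, H z = E := by
      rw [setIntegral_indicator hmeas, inter_eq_right.2 sdiff_subset]
    have hb : ‖∫ z in rbox a b c d, (if z ∈ K then 0 else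
      Complex.I * (bta T0 N (lpot ν z).toReal : ℝ) * f z * (starRingEnd ℂ) (cpot ν z))‖ ≤
        ∫ z in rbox a b c d, (l * G1 z + l⁻¹ * H z) := by
      apply norm_integral_le_of_norm_le ((i1'.const_mul l).add (iH.const_mul l⁻¹))
      rw [ae_restrict_iff' hmb]
      refine Eventually.of_forall fun z hz => ?_
      by_cases hzK : z ∈ K
      · simp [hzK, G1, H]
      · have hzm : z ∈ rbox a b c d \ K := ⟨hz, hzK⟩
        simp only [Pi.add_apply, hzK, if_false, G1, H, indicator_of_mem hzm, norm_mul, Complex.norm_I, one_mul, Complex.norm_real,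
          RCLike.norm_conj, Real.norm_of_nonneg (bta_nonneg _ _ _)]
        set x := bta T0 N (lpot ν z).toReal
        have hx : 0 ≤ x := bta_nonneg _ _ _
        set y := ‖cpot ν z‖
        set s := ‖f z‖
        have h6 : l * (x ^ 2 * y ^ 2) + l⁻¹ * s ^ 2 - x * s * y = l * ((x * y - l⁻¹ * s / 2) ^ 2) + (3 / 4) * l⁻¹ * s ^ 2 := by
          field_simp; ring
        have h7 : 0 ≤ l * ((x * y - l⁻¹ * s / 2) ^ 2) + (3 / 4) * l⁻¹ * s ^ 2 := by positivity
        linarith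
    rw [integral_add (i1'.const_mul l) (iH.const_mul l⁻¹), integral_const_mul, integral_const_mul, e1', eH] at hb
    rw [← e2, norm_mul, Complex.norm_real, Real.norm_of_nonneg hk1p.le] at hb
    have hA0 : 0 ≤ A := norm_nonneg _
    have hE0 : 0 ≤ E := integral_nonneg fun z => by positivity
    have h8 : l * (k2 * A) ≤ l * (k1 * A) := by gcongr
    have h9 : l⁻¹ * E ≤ k1 * (E / (l * N)) := by
      rw [show k1 * (E / (l * N)) = (k1 / N) * (l⁻¹ * E) by field_simp]
      have : 1 ≤ k1 / N := by rw [le_div_iff₀ hN]; linarith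
      have h10 : 0 ≤ l⁻¹ * E := by positivity
      nlinarith
    have h11 : k1 * ‖rectInt f a b c d‖ ≤ k1 * (l * A + E / (l * N)) := by
      rw [mul_add]; nlinarith
    exact le_of_mul_le_mul_left h11 hk1p
  have key2 : ∀ l : ℝ, 0 < l → ‖rectInt f a b c d‖ ≤ l * A := by
    intro l hl
    have ht : Tendsto (fun N : ℝ => l * A + E / (l * N)) atTop (𝓝 (l * A + 0)) := by
      apply tendsto_const_nhds.add
      apply Tendsto.div_atTop tendsto_const_nhds
      exact tendsto_id.const_mul_atTop hl
    rw [add_zero] at ht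
    apply ge_of_tendsto ht
    filter_upwards [eventually_gt_atTop 0] with N hN using key N hN l hl
  have key3 : ‖rectInt f a b c d‖ ≤ 0 := by
    have ht : Tendsto (fun l : ℝ => l * A) (𝓝[>] 0) (𝓝 0) := by
      have : Tendsto (fun l : ℝ => l * A) (𝓝 0) (𝓝 (0 * A)) := tendsto_id.mul_const A
      rw [zero_mul] at this
      exact this.mono_left nhdsWithin_le_nhds
    apply ge_of_tendsto ht
    filter_upwards [self_mem_nhdsWithin] with l hl using key2 l hl
  exact norm_le_zero_iff.1 key3


def bdry (a b c d : ℝ) (z : ℂ) : Prop := z.re = a ∨ z.re = b ∨ z.im = c ∨ z.im = d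

lemma hor_mem {a b c d : ℝ} (hcd : c ≤ d) {x y : ℝ} (hx : x ∈ Icc a b) (hy : y = c ∨ y = d) :
    (x + y * Complex.I : ℂ) ∈ rbox a b c d ∧ bdry a b c d (x + y * Complex.I) := by
  constructor
  · rw [rbox, Complex.mem_reProdIm]
    rcases hy with rfl | rfl <;> simp [hx.1, hx.2, hcd]
  · simp [bdry, hy]

lemma ver_mem {a b c d : ℝ} (hab : a ≤ b) {x y : ℝ} (hy : y ∈ Icc c d) (hx : x = a ∨ x = b) :
    (x + y * Complex.I : ℂ) ∈ rbox a b c d ∧ bdry a b c d (x + y * Complex.I) := by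
  constructor
  · rw [rbox, Complex.mem_reProdIm]
    rcases hx with rfl | rfl <;> simp [hy.1, hy.2, hab]
  · rcases hx with rfl | rfl <;> simp [bdry]

lemma hor_int {a b c d : ℝ} (hab : a ≤ b) (hcd : c ≤ d) {φ : ℂ → ℂ}
    (hφ : ∀ z ∈ rbox a b c d, bdry a b c d z → ContinuousAt φ z) {y : ℝ} (hy : y = c ∨ y = d) :
    IntervalIntegrable (fun x : ℝ => φ (x + y * Complex.I)) volume a b := by
  apply ContinuousOn.intervalIntegrable
  intro x hx
  rw [uIcc_of_le hab] at hx
  have h := hor_mem hcd hx hy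
  have h2 := hφ _ h.1 h.2
  apply ContinuousAt.continuousWithinAt
  exact ContinuousAt.comp (f := fun x : ℝ => (x + y * Complex.I : ℂ)) h2 (by fun_prop)

lemma ver_int {a b c d : ℝ} (hab : a ≤ b) (hcd : c ≤ d) {φ : ℂ → ℂ}
    (hφ : ∀ z ∈ rbox a b c d, bdry a b c d z → ContinuousAt φ z) {x : ℝ} (hx : x = a ∨ x = b) :
    IntervalIntegrable (fun y : ℝ => φ (x + y * Complex.I)) volume c d := by
  apply ContinuousOn.intervalIntegrable
  intro y hy
  rw [uIcc_of_le hcd] at hy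
  have h := ver_mem hab hy hx
  have h2 := hφ _ h.1 h.2
  apply ContinuousAt.continuousWithinAt
  exact ContinuousAt.comp (f := fun y : ℝ => (x + y * Complex.I : ℂ)) h2 (by fun_prop)

lemma rectInt_congr {a b c d : ℝ} (hab : a ≤ b) (hcd : c ≤ d) {φ ψ : ℂ → ℂ}
    (h : ∀ z ∈ rbox a b c d, bdry a b c d z → φ z = ψ z) : rectInt φ a b c d = rectInt ψ a b c d := by
  have e1 : ∀ y, (y = c ∨ y = d) → ∫ x : ℝ in a..b, φ (x + y * Complex.I) = ∫ x : ℝ in a..b, ψ (x + y * Complex.I) := by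
    intro y hy
    apply intervalIntegral.integral_congr
    intro x hx
    rw [uIcc_of_le hab] at hx
    exact h _ (hor_mem hcd hx hy).1 (hor_mem hcd hx hy).2
  have e2 : ∀ x, (x = a ∨ x = b) → ∫ y : ℝ in c..d, φ (x + y * Complex.I) = ∫ y : ℝ in c..d, ψ (x + y * Complex.I) := by
    intro x hx
    apply intervalIntegral.integral_congr
    intro y hy
    rw [uIcc_of_le hcd] at hy
    exact h _ (ver_mem hab hy hx).1 (ver_mem hab hy hx).2
  rw [rectInt, rectInt, e1 c (Or.inl rfl), e1 d (Or.inr rfl), e2 a (Or.inl rfl), e2 b (Or.inr rfl)]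

lemma rectInt_sub_mul {a b c d : ℝ} (hab : a ≤ b) (hcd : c ≤ d) {φ ψ : ℂ → ℂ} (k : ℂ)
    (hφ : ∀ z ∈ rbox a b c d, bdry a b c d z → ContinuousAt φ z)
    (hψ : ∀ z ∈ rbox a b c d, bdry a b c d z → ContinuousAt ψ z) :
    rectInt (fun z => k * ψ z - φ z) a b c d = k * rectInt ψ a b c d - rectInt φ a b c d := by
  simp only [rectInt]
  rw [intervalIntegral.integral_sub ((hor_int hab hcd hψ (Or.inl rfl)).const_mul k) (hor_int hab hcd hφ (Or.inl rfl)),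
    intervalIntegral.integral_sub ((hor_int hab hcd hψ (Or.inr rfl)).const_mul k) (hor_int hab hcd hφ (Or.inr rfl)),
    intervalIntegral.integral_sub ((ver_int hab hcd hψ (Or.inl rfl)).const_mul k) (ver_int hab hcd hφ (Or.inl rfl)),
    intervalIntegral.integral_sub ((ver_int hab hcd hψ (Or.inr rfl)).const_mul k) (ver_int hab hcd hφ (Or.inr rfl))]
  simp only [intervalIntegral.integral_const_mul]
  ring

lemma rectInt_diff {a b c d : ℝ} (hab : a ≤ b) (hcd : c ≤ d) {φ : ℂ → ℂ}
    (hφ : ∀ z ∈ rbox a b c d, bdry a b c d z → ContinuousAt φ z) :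
    DifferentiableOn ℂ (fun z0 => rectInt (fun z => φ z * (z0 - z)⁻¹) a b c d) (Ioo a b ×ℂ Ioo c d) := by
  intro z0 hz0
  apply DifferentiableAt.differentiableWithinAt
  obtain ⟨⟨h1, h2⟩, h3, h4⟩ := hz0
  have hor : ∀ y, (y = c ∨ y = d) → DifferentiableAt ℂ (fun z0 : ℂ => ∫ x : ℝ in a..b, φ (x + y * Complex.I) * (z0 - (x + y * Complex.I))⁻¹) z0 := by
    intro y hy
    have hint := hor_int hab hcd hφ hy
    rw [intervalIntegrable_iff_integrableOn_Ioc_of_le hab] at hint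
    have hη : 0 < |z0.im - y| := by
      rw [abs_pos, sub_ne_zero]
      rcases hy with rfl | rfl
      · exact h3.ne'
      · exact h4.ne
    have := hasDerivAt_cauchy_pow (volume.restrict (Ioc a b)) (fun x : ℝ => (x + y * Complex.I : ℂ))
      (by fun_prop) (fun x : ℝ => φ (x + y * Complex.I)) hint (z0 := z0) hη (fun x => by
        have := Complex.abs_im_le_norm (z0 - (x + y * Complex.I))
        simpa using this)
    simp only [intervalIntegral.integral_of_le hab]
    exact this.differentiableAt
  have ver : ∀ x, (x = a ∨ x = b) → DifferentiableAt ℂ (fun z0 : ℂ => ∫ y : ℝ in c..d, φ (x + y * Complex.I) * (z0 - (x + y * Complex.I))⁻¹) z0 := by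
    intro x hx
    have hint := ver_int hab hcd hφ hx
    rw [intervalIntegrable_iff_integrableOn_Ioc_of_le hcd] at hint
    have hη : 0 < |z0.re - x| := by
      rw [abs_pos, sub_ne_zero]
      rcases hx with rfl | rfl
      · exact h1.ne'
      · exact h2.ne
    have := hasDerivAt_cauchy_pow (volume.restrict (Ioc c d)) (fun y : ℝ => (x + y * Complex.I : ℂ))
      (by fun_prop) (fun y : ℝ => φ (x + y * Complex.I)) hint (z0 := z0) hη (fun y => by
        have := Complex.abs_re_le_norm (z0 - (x + y * Complex.I))
        simpa using this)
    simp only [intervalIntegral.integral_of_le hcd]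
    exact this.differentiableAt
  simp only [rectInt]
  exact (((hor c (Or.inl rfl)).sub (hor d (Or.inr rfl))).add ((ver b (Or.inr rfl)).const_mul _)).sub
    ((ver a (Or.inl rfl)).const_mul _)

lemma int_pos (L : ℂ →L[ℝ] ℝ) {v : ℝ → ℂ} (hv : Continuous v) {a b : ℝ} (hab : a < b) (h : ∀ x, 0 < L (v x)) :
    0 < L (∫ x in a..b, v x) := by
  rw [← L.intervalIntegral_comp_comm (hv.intervalIntegrable _ _)]
  exact intervalIntegral.intervalIntegral_pos_of_pos ((L.continuous.comp hv).intervalIntegrable _ _) h hab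

lemma rectInt_one_ne {a b c d : ℝ} {z0 : ℂ} (hz0 : z0 ∈ Ioo a b ×ℂ Ioo c d) :
    rectInt (fun z => 1 * (z0 - z)⁻¹) a b c d ≠ 0 := by
  obtain ⟨⟨h1, h2⟩, h3, h4⟩ := hz0
  have hab : a < b := h1.trans h2
  have hcd : c < d := h3.trans h4
  simp only [one_mul]
  have hne1 : ∀ y : ℝ, y ≠ z0.im → ∀ x : ℝ, z0 - (x + y * Complex.I) ≠ 0 := by
    intro y hy x h
    have := congrArg Complex.im h
    simp at this
    exact hy (by linarith)
  have hne2 : ∀ x : ℝ, x ≠ z0.re → ∀ y : ℝ, z0 - (x + y * Complex.I) ≠ 0 := by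
    intro x hx y h
    have := congrArg Complex.re h
    simp at this
    exact hx (by linarith)
  have i1 := int_pos (-Complex.imCLM) (v := fun x : ℝ => (z0 - (x + c * Complex.I))⁻¹) (by
    apply Continuous.inv₀ (by fun_prop) (hne1 c h3.ne)) hab (fun x => by
      have := Complex.normSq_pos.2 (hne1 c h3.ne x)
      simp only [neg_apply, Complex.imCLM_apply, Complex.inv_im]
      rw [← neg_div, neg_neg]
      apply div_pos _ this
      simpa using h3)
  have i2 := int_pos (Complex.imCLM) (v := fun x : ℝ => (z0 - (x + d * Complex.I))⁻¹) (by
    apply Continuous.inv₀ (by fun_prop) (hne1 d h4.ne')) hab (fun x => by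
      have := Complex.normSq_pos.2 (hne1 d h4.ne' x)
      simp only [Complex.imCLM_apply, Complex.inv_im]
      apply div_pos _ this
      simpa using h4)
  have i3 := int_pos (-Complex.reCLM) (v := fun y : ℝ => (z0 - (b + y * Complex.I))⁻¹) (by
    apply Continuous.inv₀ (by fun_prop) (hne2 b h2.ne')) hcd (fun x => by
      have := Complex.normSq_pos.2 (hne2 b h2.ne' x)
      simp only [neg_apply, Complex.reCLM_apply, Complex.inv_re]
      rw [← neg_div]
      apply div_pos _ this
      simpa using h2)
  have i4 := int_pos (Complex.reCLM) (v := fun y : ℝ => (z0 - (a + y * Complex.I))⁻¹) (by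
    apply Continuous.inv₀ (by fun_prop) (hne2 a h1.ne)) hcd (fun x => by
      have := Complex.normSq_pos.2 (hne2 a h1.ne x)
      simp only [Complex.reCLM_apply, Complex.inv_re]
      apply div_pos _ this
      simpa using h1)
  intro h0
  have := congrArg Complex.im h0
  simp only [rectInt, Complex.sub_im, Complex.add_im, Complex.mul_im, Complex.I_re, Complex.I_im, Complex.zero_im, zero_mul, one_mul, zero_add] at this
  simp only [neg_apply, Complex.imCLM_apply, Complex.reCLM_apply] at i1 i2 i3 i4
  linarith

lemma L2h_int {D : Set ℂ} (hD : IsOpen D) {f : ℂ → ℂ} (hf : f ∈ L2h D) :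
    IntegrableOn (fun z => ‖f z‖ ^ 2) D := by
  refine ⟨(hf.1.continuousOn.norm.pow 2).aestronglyMeasurable hD.measurableSet, ?_⟩
  rw [hasFiniteIntegral_iff_enorm]
  refine lt_of_le_of_lt (le_of_eq ?_) hf.2
  apply lintegral_congr
  intro z
  rw [enorm_pow, enorm_norm]
  rfl


lemma dslope_sq_int {D S : Set ℂ} (hD : IsOpen D) {f : ℂ → ℂ} (hf : f ∈ L2h D) {z0 : ℂ} (hz0 : z0 ∈ D)
    (hS : MeasurableSet S) (hSD : S ⊆ D) (hSb : volume S < ⊤) :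
    IntegrableOn (fun z => ‖dslope f z0 z‖ ^ 2) S := by
  have hds : DifferentiableOn ℂ (dslope f z0) D := (Complex.differentiableOn_dslope (hD.mem_nhds hz0)).2 hf.1
  obtain ⟨δ, hδ, hδD⟩ := Metric.nhds_basis_closedBall.mem_iff.1 (hD.mem_nhds hz0)
  obtain ⟨M, hM⟩ := (isCompact_closedBall z0 δ).exists_bound_of_continuousOn (hds.continuousOn.mono hδD)
  have hfi := (L2h_int hD hf).mono_set hSD
  have : IsFiniteMeasure (volume.restrict S) := ⟨by simpa using hSb⟩
  refine Integrable.mono' (g := fun z => (M ^ 2 + 2 * ‖f z0‖ ^ 2 / δ ^ 2) + (2 / δ ^ 2) * ‖f z‖ ^ 2)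
    ((integrable_const _).add (hfi.const_mul _)) ?_ ?_
  · exact ((hds.continuousOn.mono hSD).norm.pow 2).aestronglyMeasurable hS
  · refine Eventually.of_forall fun z => ?_
    rw [Real.norm_of_nonneg (by positivity)]
    by_cases hz : z ∈ closedBall z0 δ
    · have h1 := hM z hz
      have h2 : ‖dslope f z0 z‖ ^ 2 ≤ M ^ 2 := by gcongr
      have h3 : 0 ≤ 2 * ‖f z0‖ ^ 2 / δ ^ 2 := by positivity
      have h4 : 0 ≤ (2 / δ ^ 2) * ‖f z‖ ^ 2 := by positivity
      linarith
    · rw [mem_closedBall, not_le, dist_eq_norm] at hz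
      have hne : z ≠ z0 := by rintro rfl; simp at hz; linarith
      rw [dslope_of_ne f hne, slope_def_field, norm_div]
      have h1 : ‖f z - f z0‖ / ‖z - z0‖ ≤ (‖f z‖ + ‖f z0‖) / δ := by
        gcongr
        exact norm_sub_le _ _
      have h2 : (‖f z - f z0‖ / ‖z - z0‖) ^ 2 ≤ ((‖f z‖ + ‖f z0‖) / δ) ^ 2 := by gcongr
      have h3 : ((‖f z‖ + ‖f z0‖) / δ) ^ 2 ≤ 2 * ‖f z0‖ ^ 2 / δ ^ 2 + (2 / δ ^ 2) * ‖f z‖ ^ 2 := by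
        rw [div_pow, div_mul_eq_mul_div, ← add_div]
        gcongr
        nlinarith [sq_nonneg (‖f z‖ - ‖f z0‖)]
      have := sq_nonneg M
      linarith

theorem forward {D : Set ℂ} (hopen : IsOpen D) (hL : IsL2hDomainOfHolomorphy D) :
    ∀ w ∈ frontier D, ∀ U ∈ 𝓝 w, ¬ PolarSet (U \ D) := by
  intro w hw V hV hpol
  have hwD : w ∉ D := by
    rw [hopen.frontier_eq] at hw; exact hw.2
  have hwcl : w ∈ closure D := frontier_subset_closure hw
  obtain ⟨U, hU, hUc, hwU, u, hu, hne, hbot⟩ := hpol w ⟨mem_of_mem_nhds hV, hwD⟩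
  obtain ⟨ρ0, hρ0, hρ0U⟩ := Metric.nhds_basis_closedBall.mem_iff.1 (inter_mem hV (hU.mem_nhds hwU))
  set ρ := min ρ0 (1/4) with hρdef
  have hρ : 0 < ρ := lt_min hρ0 (by norm_num)
  have hρ4 : ρ ≤ 1/4 := min_le_right _ _
  have hρU : closedBall w ρ ⊆ V ∩ U := (closedBall_subset_closedBall (min_le_left _ _)).trans hρ0U
  set K := closedBall w (ρ / 4) \ D with hKdef
  have hK : IsCompact K := (isCompact_closedBall w _).diff hopen
  have hwK : w ∈ K := ⟨mem_closedBall_self (by positivity), hwD⟩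
  have hKρ : closedBall w (ρ / 4) ⊆ closedBall w ρ := closedBall_subset_closedBall (by linarith)
  have huK : ∀ z ∈ K, u z = ⊥ := fun z hz => by
    have h1 := hρU (hKρ hz.1)
    exact hbot z ⟨⟨h1.1, hz.2⟩, h1.2⟩
  rcases potential_dichotomy hK ⟨w, hwK⟩ with ⟨μ, hμ, C, hC⟩ | ⟨ν, hνp, hν⟩
  · exact no_bdd_pot hU hUc hu hne hρ hρ4 (hρU.trans inter_subset_right) hK ⟨w, hwK⟩ sdiff_subset huK μ hC
  have hre := re_null ν hν
  have him := im_null ν hν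
  obtain ⟨a, ha, haK⟩ := exists_notMem_null hre (show w.re - ρ / 8 < w.re by linarith)
  obtain ⟨b, hb, hbK⟩ := exists_notMem_null hre (show w.re < w.re + ρ / 8 by linarith)
  obtain ⟨c, hc, hcK⟩ := exists_notMem_null him (show w.im - ρ / 8 < w.im by linarith)
  obtain ⟨d, hd, hdK⟩ := exists_notMem_null him (show w.im < w.im + ρ / 8 by linarith)
  have hab : a < b := ha.2.trans hb.1
  have hcd : c < d := hc.2.trans hd.1
  have hbox : rbox a b c d ⊆ closedBall w (ρ / 4) := by
    rintro z ⟨⟨h1, h2⟩, h3, h4⟩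
    rw [mem_closedBall, dist_eq_norm]
    have h5 := Complex.norm_le_abs_re_add_abs_im (z - w)
    have h6 : |(z - w).re| ≤ ρ / 8 := by
      rw [Complex.sub_re, abs_le]; constructor <;> linarith [ha.1, hb.2]
    have h7 : |(z - w).im| ≤ ρ / 8 := by
      rw [Complex.sub_im, abs_le]; constructor <;> linarith [hc.1, hd.2]
    linarith
  have hboxD : ∀ z ∈ rbox a b c d, z ∉ K → z ∈ D := by
    intro z hz hzK
    by_contra h
    exact hzK ⟨hbox hz, h⟩
  have hR : ∀ z ∈ rbox a b c d, ∀ ξ ∈ K, ‖z - ξ‖ ≤ 1/2 := by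
    intro z hz ξ hξ
    have h1 := hbox hz
    have h2 := hξ.1
    rw [mem_closedBall] at h1 h2
    rw [← dist_eq_norm]
    have := dist_triangle_right z ξ w
    linarith
  have hΓ : ∀ z ∈ rbox a b c d, bdry a b c d z → z ∉ K := by
    intro z _ hz hzK
    rcases hz with h | h | h | h
    · exact haK ⟨z, hzK, h⟩
    · exact hbK ⟨z, hzK, h⟩
    · exact hcK ⟨z, hzK, h⟩
    · exact hdK ⟨z, hzK, h⟩
  set D1 : Set ℂ := Ioo a b ×ℂ Ioo c d with hD1
  have hD1o : IsOpen D1 := isOpen_Ioo.reProdIm isOpen_Ioo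
  have hwD1 : w ∈ D1 := ⟨⟨ha.2, hb.1⟩, hc.2, hd.1⟩
  have hD1c : IsConnected D1 := by
    refine ⟨⟨w, hwD1⟩, ?_⟩
    apply Convex.isPreconnected
    exact ((convex_Ioo a b).linear_preimage Complex.reLm).inter ((convex_Ioo c d).linear_preimage Complex.imLm)
  have hD1b : D1 ⊆ rbox a b c d := fun z hz => ⟨Ioo_subset_Icc_self hz.1, Ioo_subset_Icc_self hz.2⟩
  obtain ⟨x, hxD1, hxD⟩ := mem_closure_iff.1 hwcl D1 hD1o hwD1
  obtain ⟨δ, hδ, hδb⟩ := Metric.isOpen_iff.1 (hD1o.inter hopen) x ⟨hxD1, hxD⟩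
  apply hL
  refine ⟨ball x δ, D1, isOpen_ball, isConnected_ball hδ, hD1o, hD1c, hδb, fun h => hwD (h hwD1), ?_⟩
  intro f hf
  have hfΓ : ∀ z ∈ rbox a b c d, bdry a b c d z → ContinuousAt f z := by
    intro z hz hzb
    exact (hf.1.differentiableAt (hopen.mem_nhds (hboxD z hz (hΓ z hz hzb)))).continuousAt
  refine ⟨fun z0 => rectInt (fun z => f z * (z0 - z)⁻¹) a b c d / rectInt (fun z => 1 * (z0 - z)⁻¹) a b c d, ?_, ?_⟩
  · apply DifferentiableOn.div (rectInt_diff hab.le hcd.le hfΓ)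
    · exact rectInt_diff hab.le hcd.le (φ := fun _ => 1) fun z _ _ => continuousAt_const
    · intro z0 hz0
      exact rectInt_one_ne hz0
  · intro z0 hz0
    have hz0' := hδb hz0
    have hz0D := hz0'.2
    have hz0D1 := hz0'.1
    have hne0 : ∀ z ∈ rbox a b c d, bdry a b c d z → z0 - z ≠ 0 := by
      intro z _ hz h0
      have h1 : z0 = z := sub_eq_zero.1 h0
      obtain ⟨⟨h2, h3⟩, h4, h5⟩ := hz0D1
      rw [h1] at h2 h3 h4 h5
      rcases hz with h | h | h | h
      · exact h2.ne' h
      · exact h3.ne h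
      · exact h4.ne' h
      · exact h5.ne h
    have hinvc : ∀ z ∈ rbox a b c d, bdry a b c d z → ContinuousAt (fun z => (z0 - z)⁻¹) z := by
      intro z hz hzb
      exact ContinuousAt.inv₀ (by fun_prop) (hne0 z hz hzb)
    have hds : DifferentiableOn ℂ (dslope f z0) D := (Complex.differentiableOn_dslope (hopen.mem_nhds hz0D)).2 hf.1
    have hz := rect_zero hK ν hν hab hcd hR hΓ (dslope f z0)
      (fun z hz hzK => hds.differentiableAt (hopen.mem_nhds (hboxD z hz hzK)))
      (dslope_sq_int hopen hf hz0D
        ((isCompact_rbox a b c d).isClosed.measurableSet.diff hK.isClosed.measurableSet)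
        (fun z hz => hboxD z hz.1 hz.2)
        (lt_of_le_of_lt (measure_mono sdiff_subset) (isCompact_rbox a b c d).measure_lt_top))
    have e : rectInt (dslope f z0) a b c d =
        rectInt (fun z => f z0 * (1 * (z0 - z)⁻¹) - f z * (z0 - z)⁻¹) a b c d := by
      apply rectInt_congr hab.le hcd.le
      intro z hz hzb
      have h1 := hne0 z hz hzb
      have hne1 : z ≠ z0 := fun h => h1 (by rw [h, sub_self])
      have h2 : z - z0 ≠ 0 := sub_ne_zero.2 hne1
      rw [dslope_of_ne f hne1, slope_def_field]
      field_simp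
      ring
    rw [e, rectInt_sub_mul (φ := fun z => f z * (z0 - z)⁻¹) (ψ := fun z => 1 * (z0 - z)⁻¹) hab.le hcd.le (f z0) (fun z hz hzb => (hfΓ z hz hzb).mul (hinvc z hz hzb))
      (fun z hz hzb => continuousAt_const.mul (hinvc z hz hzb))] at hz
    have hW := rectInt_one_ne hz0D1
    show rectInt (fun z => f z * (z0 - z)⁻¹) a b c d / rectInt (fun z => 1 * (z0 - z)⁻¹) a b c d = f z0
    rw [div_eq_iff hW]
    exact (sub_eq_zero.1 hz).symm


lemma radial_lint (F H : ℝ → ℝ≥0∞) (hH : Measurable H)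
    (hFH : ∀ r : ℝ, 0 < r → ENNReal.ofReal r * F r ≤ H r) :
    ∫⁻ y : ℂ, F ‖y‖ ≤ ENNReal.ofReal (2 * Real.pi) * ∫⁻ r in Ioi (0:ℝ), H r := by
  rw [← Complex.lintegral_comp_polarCoord_symm]
  calc _ ≤ ∫⁻ p in Complex.polarCoord.target, H p.1 := by
        apply setLIntegral_mono (hH.comp measurable_fst)
        intro p hp
        have h0 : 0 < p.1 := hp.1
        simp only [smul_eq_mul, Function.comp_apply]
        rw [Complex.norm_polarCoord_symm, abs_of_pos h0]
        exact hFH _ h0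
    _ = _ := by
        rw [Complex.polarCoord_target, Measure.volume_eq_prod, ← Measure.prod_restrict,
          lintegral_prod (fun p : ℝ × ℝ => H p.1) (hH.comp measurable_fst).aemeasurable]
        simp only [lintegral_const, Measure.restrict_apply MeasurableSet.univ, univ_inter, Real.volume_Ioo]
        rw [lintegral_mul_const _ hH, mul_comm]
        congr 2; ring

lemma int_inv_max {h R : ℝ} (hh : 0 < h) (hR : h ≤ R) :
    ∫⁻ r in Ioi (0:ℝ), (Ioo 0 R).indicator (fun r => ENNReal.ofReal ((max r h)⁻¹)) r
      ≤ ENNReal.ofReal (1 + Real.log (R / h)) := by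
  rw [setLIntegral_indicator measurableSet_Ioo]
  have hc : Continuous fun r : ℝ => (max r h)⁻¹ :=
    (continuous_id.max continuous_const).inv₀ fun r => (lt_max_of_lt_right hh).ne'
  have h0R : 0 ≤ R := hh.le.trans hR
  calc _ ≤ ∫⁻ r in Ioc 0 R, ENNReal.ofReal ((max r h)⁻¹) :=
        lintegral_mono_set (fun x hx => Ioo_subset_Ioc_self hx.1)
    _ = ENNReal.ofReal (∫ r in Ioc 0 R, (max r h)⁻¹) := by
        rw [ofReal_integral_eq_lintegral_ofReal]
        · exact (hc.intervalIntegrable 0 R).1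
        · exact Eventually.of_forall fun r => inv_nonneg.2 (hh.le.trans (le_max_right _ _))
    _ = ENNReal.ofReal (1 + Real.log (R / h)) := by
        congr 1
        rw [← intervalIntegral.integral_of_le h0R,
          ← intervalIntegral.integral_add_adjacent_intervals (hc.intervalIntegrable 0 h) (hc.intervalIntegrable h R)]
        congr 1
        · rw [intervalIntegral.integral_congr (g := fun _ => h⁻¹)]
          · simp; field_simp
          · intro r hr
            rw [uIcc_of_le hh.le] at hr
            simp only [max_eq_right hr.2]
        · rw [intervalIntegral.integral_congr (g := fun r => r⁻¹)]
          · exact integral_inv_of_pos hh (hh.trans_le hR)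
          · intro r hr
            rw [uIcc_of_le hR] at hr
            simp only [max_eq_left hr.1]

lemma kern1 {h R : ℝ} (hh : 0 < h) (hR : h ≤ R) :
    ∫⁻ y in ball (0:ℂ) R, ‖y‖ₑ⁻¹ * (max ‖y‖ₑ (ENNReal.ofReal h))⁻¹
      ≤ ENNReal.ofReal (2 * Real.pi) * ENNReal.ofReal (1 + Real.log (R / h)) := by
  rw [← lintegral_indicator measurableSet_ball]
  set F : ℝ → ℝ≥0∞ := fun r => if r < R then (ENNReal.ofReal r)⁻¹ * (max (ENNReal.ofReal r) (ENNReal.ofReal h))⁻¹ else 0 with hF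
  have e : ∀ y : ℂ, (ball (0:ℂ) R).indicator (fun y => ‖y‖ₑ⁻¹ * (max ‖y‖ₑ (ENNReal.ofReal h))⁻¹) y = F ‖y‖ := by
    intro y
    simp only [indicator, mem_ball_zero_iff, hF, ofReal_norm]
  simp_rw [e]
  refine (radial_lint F ((Ioo 0 R).indicator (fun r => ENNReal.ofReal ((max r h)⁻¹))) ?_ ?_).trans ?_
  · apply Measurable.indicator _ measurableSet_Ioo
    fun_prop
  · intro r hr
    simp only [hF, indicator, mem_Ioo, hr, true_and]
    split_ifs
    · rw [← mul_assoc, ENNReal.mul_inv_cancel (by simpa using hr) ENNReal.ofReal_ne_top, one_mul,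
        ← ENNReal.ofReal_max, ENNReal.ofReal_inv_of_pos (lt_max_of_lt_right hh)]
    · simp
  · gcongr
    exact int_inv_max hh hR

lemma kern_ptw (z ζ ξ : ℂ) : ‖z - ζ‖ₑ⁻¹ * ‖z - ξ‖ₑ⁻¹ ≤
    ‖z - ζ‖ₑ⁻¹ * (max ‖z - ζ‖ₑ (ENNReal.ofReal (‖ζ - ξ‖ / 2)))⁻¹ +
    ‖z - ξ‖ₑ⁻¹ * (max ‖z - ξ‖ₑ (ENNReal.ofReal (‖ζ - ξ‖ / 2)))⁻¹ := by
  have key : ∀ ζ ξ : ℂ, ‖z - ζ‖ ≤ ‖z - ξ‖ → ‖z - ζ‖ₑ⁻¹ * ‖z - ξ‖ₑ⁻¹ ≤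
    ‖z - ζ‖ₑ⁻¹ * (max ‖z - ζ‖ₑ (ENNReal.ofReal (‖ζ - ξ‖ / 2)))⁻¹ := by
    intro ζ ξ h
    gcongr
    apply max_le
    · rw [← ofReal_norm, ← ofReal_norm]; exact ENNReal.ofReal_le_ofReal h
    · rw [← ofReal_norm]; apply ENNReal.ofReal_le_ofReal
      have := norm_sub_le (z - ξ) (z - ζ)
      rw [show z - ξ - (z - ζ) = ζ - ξ by ring] at this
      linarith
  rcases le_total ‖z - ζ‖ ‖z - ξ‖ with h | h
  · exact (key ζ ξ h).trans le_self_add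
  · rw [mul_comm]
    have := key ξ ζ h
    rw [norm_sub_rev ξ ζ] at this
    exact this.trans le_add_self

lemma kern2 {D : Set ℂ} {R : ℝ} (hR1 : 1 ≤ R) {ζ ξ : ℂ} (hζ : ∀ z ∈ D, ‖z - ζ‖ < R)
    (hξ : ∀ z ∈ D, ‖z - ξ‖ < R) (hd : ‖ζ - ξ‖ ≤ 1) :
    ∫⁻ z in D, ‖z - ζ‖ₑ⁻¹ * ‖z - ξ‖ₑ⁻¹ ≤
      ENNReal.ofReal (4 * Real.pi) * (ENNReal.ofReal (1 + Real.log (2 * R)) + lker (ζ - ξ)) := by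
  by_cases hne : ζ - ξ = 0
  · rw [hne, lker_zero, add_top, ENNReal.mul_top (by simp [Real.pi_pos])]
    exact le_top
  have hd0 : 0 < ‖ζ - ξ‖ := norm_pos_iff.2 hne
  set h := ‖ζ - ξ‖ / 2 with hh
  have hh0 : 0 < h := by positivity
  set G : ℂ → ℝ≥0∞ := fun y => ‖y‖ₑ⁻¹ * (max ‖y‖ₑ (ENNReal.ofReal h))⁻¹ with hG
  have hGm : Measurable G := by fun_prop
  have tr : ∀ ζ : ℂ, (∀ z ∈ D, ‖z - ζ‖ < R) → ∫⁻ z in D, G (z - ζ) ≤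
      ENNReal.ofReal (2 * Real.pi) * ENNReal.ofReal (1 + Real.log (R / h)) := by
    intro ζ hζ
    refine le_trans ?_ (kern1 hh0 (show h ≤ R by linarith))
    rw [← lintegral_indicator measurableSet_ball,
      ← lintegral_sub_right_eq_self (fun y => (ball (0:ℂ) R).indicator G y) ζ]
    calc ∫⁻ z in D, G (z - ζ) ≤ ∫⁻ z in ball ζ R, G (z - ζ) :=
          lintegral_mono_set (fun z hz => by rw [mem_ball, dist_eq_norm]; exact hζ z hz)
      _ = _ := by
          rw [← lintegral_indicator measurableSet_ball]
          congr 1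
          ext z
          simp [indicator, dist_eq_norm]
  calc _ ≤ ∫⁻ z in D, (G (z - ζ) + G (z - ξ)) := lintegral_mono fun z => kern_ptw z ζ ξ
    _ = (∫⁻ z in D, G (z - ζ)) + ∫⁻ z in D, G (z - ξ) := by
        rw [lintegral_add_left]
        exact hGm.comp (measurable_id.sub_const ζ)
    _ ≤ ENNReal.ofReal (2 * Real.pi) * ENNReal.ofReal (1 + Real.log (R / h)) +
        ENNReal.ofReal (2 * Real.pi) * ENNReal.ofReal (1 + Real.log (R / h)) := add_le_add (tr ζ hζ) (tr ξ hξ)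
    _ = ENNReal.ofReal (4 * Real.pi) * ENNReal.ofReal (1 + Real.log (R / h)) := by
        rw [← add_mul, ← ENNReal.ofReal_add (by positivity) (by positivity)]
        congr 2; ring
    _ ≤ _ := by
        gcongr
        rw [lker_ne hne]
        have e : 1 + Real.log (R / h) = (1 + Real.log (2 * R)) + -Real.log ‖ζ - ξ‖ := by
          rw [hh, show R / (‖ζ - ξ‖ / 2) = 2 * R / ‖ζ - ξ‖ by field_simp,
            Real.log_div (by positivity) hd0.ne']
          ring
        rw [e]
        exact ENNReal.ofReal_add_le


lemma cauchy_hasDeriv {K : Set ℂ} (hK : IsCompact K) (μ : Measure K) [IsProbabilityMeasure μ]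
    (g : C(K, ℂ)) {z : ℂ} (hz : z ∉ K) :
    HasDerivAt (fun z => ∫ ζ : K, g ζ * (z - (ζ : ℂ))⁻¹ ∂μ) (∫ ζ : K, g ζ * (-(((z - (ζ : ℂ))⁻¹) ^ 2)) ∂μ) z := by
  have : CompactSpace K := isCompact_iff_compactSpace.1 hK
  obtain ⟨η, hη, h⟩ := off_dist hK hz
  refine hasDerivAt_cauchy_pow μ (fun ζ : K => (ζ : ℂ)) measurable_subtype_coe.aemeasurable (fun ζ => g ζ)
    ?_ hη (fun x => h x x.2)
  refine Integrable.of_bound (g.continuous.measurable.aestronglyMeasurable) ‖g‖ ?_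
  exact Eventually.of_forall fun x => g.norm_coe_le_norm x

lemma cauchy_ptw {K : Set ℂ} (μ : Measure K) (g : K → ℂ) {M : ℝ} (hM : ∀ ζ, ‖g ζ‖ ≤ M) (z : ℂ) :
    ‖∫ ζ : K, g ζ * (z - (ζ : ℂ))⁻¹ ∂μ‖ₑ ≤ ENNReal.ofReal M * ∫⁻ ζ : K, ‖z - (ζ : ℂ)‖ₑ⁻¹ ∂μ := by
  refine (enorm_integral_le_lintegral_enorm _).trans ?_
  rw [← lintegral_const_mul' _ _ ENNReal.ofReal_ne_top]
  apply lintegral_mono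
  intro ζ
  dsimp only
  rw [enorm_mul]
  gcongr
  · rw [← ofReal_norm]
    exact ENNReal.ofReal_le_ofReal (hM ζ)
  · by_cases h0 : z - (ζ : ℂ) = 0
    · simp [h0]
    · rw [enorm_inv h0]

lemma tonelli3 {α β : Type*} [MeasurableSpace α] [MeasurableSpace β] (ν : Measure α) [SFinite ν]
    (μ : Measure β) [SFinite μ] (k : α × β → ℝ≥0∞) (hk : Measurable k) :
    ∫⁻ z, (∫⁻ ζ, k (z, ζ) ∂μ) ^ 2 ∂ν = ∫⁻ ζ, ∫⁻ ξ, ∫⁻ z, k (z, ζ) * k (z, ξ) ∂ν ∂μ ∂μ := by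
  have hm1 : ∀ z, Measurable fun ζ => k (z, ζ) := fun z => hk.comp measurable_prodMk_left
  have hsq : ∀ z, (∫⁻ ζ, k (z, ζ) ∂μ) ^ 2 = ∫⁻ ζ, ∫⁻ ξ, k (z, ζ) * k (z, ξ) ∂μ ∂μ := by
    intro z
    simp_rw [lintegral_const_mul _ (hm1 z)]
    rw [lintegral_mul_const _ (hm1 z), sq]
  have hm3 : Measurable fun p : (α × β) × β => k p.1 * k (p.1.1, p.2) :=
    (hk.comp measurable_fst).mul (hk.comp ((measurable_fst.comp measurable_fst).prodMk measurable_snd))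
  simp_rw [hsq]
  rw [lintegral_lintegral_swap]
  · congr 1
    ext ζ
    rw [lintegral_lintegral_swap]
    exact (hm3.comp ((measurable_fst.prodMk measurable_const).prodMk measurable_snd)).aemeasurable
  · exact (Measurable.lintegral_prod_right hm3).aemeasurable

lemma cauchy_L2h_aux1 {D K : Set ℂ} (hDb : Bornology.IsBounded D) (hK : IsCompact K)
    (hKd : ∀ ζ ∈ K, ∀ ξ ∈ K, ‖ζ - ξ‖ ≤ 1) (μ : Measure K) [IsProbabilityMeasure μ]
    {C : ℝ} (hC : ∀ x : K, lpot μ x ≤ ENNReal.ofReal C) :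
    ∫⁻ z in D, (∫⁻ ζ : K, ‖z - (ζ : ℂ)‖ₑ⁻¹ ∂μ) ^ 2 < ⊤ := by
  obtain ⟨R0, hR0⟩ := hDb.exists_norm_le
  obtain ⟨R1, hR1⟩ := hK.isBounded.exists_norm_le
  obtain ⟨R, hR⟩ : ∃ R, R = |R0| + |R1| + 1 := ⟨_, rfl⟩
  have hR1' : 1 ≤ R := by have := abs_nonneg R0; have := abs_nonneg R1; linarith
  have hzR : ∀ ζ ∈ K, ∀ z ∈ D, ‖z - ζ‖ < R := by
    intro ζ hζ z hz
    have h1 := hR0 z hz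
    have h2 := hR1 ζ hζ
    have := norm_sub_le z ζ
    have := le_abs_self R0
    have := le_abs_self R1
    linarith
  have hm2 : Measurable fun p : ℂ × K => ‖p.1 - (p.2 : ℂ)‖ₑ⁻¹ := by
    apply Measurable.inv
    exact (measurable_fst.sub (measurable_subtype_coe.comp measurable_snd)).enorm
  rw [tonelli3 (volume.restrict D) μ (fun p : ℂ × K => ‖p.1 - (p.2 : ℂ)‖ₑ⁻¹) hm2]
  obtain ⟨A, hA⟩ : ∃ A, A = ENNReal.ofReal (4 * Real.pi) := ⟨_, rfl⟩
  obtain ⟨B, hB⟩ : ∃ B, B = ENNReal.ofReal (1 + Real.log (2 * R)) := ⟨_, rfl⟩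
  have h1 : ∀ ζ ξ : K, ∫⁻ z in D, ‖z - (ζ : ℂ)‖ₑ⁻¹ * ‖z - (ξ : ℂ)‖ₑ⁻¹ ≤ A * (B + lker (ζ - ξ)) := by
    intro ζ ξ
    rw [hA, hB]
    exact kern2 hR1' (hzR ζ ζ.2) (hzR ξ ξ.2) (hKd ζ ζ.2 ξ ξ.2)
  have h2 : ∀ ζ : K, ∫⁻ ξ : K, (∫⁻ z in D, ‖z - (ζ : ℂ)‖ₑ⁻¹ * ‖z - (ξ : ℂ)‖ₑ⁻¹) ∂μ ≤ A * (B + ENNReal.ofReal C) := by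
    intro ζ
    refine (lintegral_mono (h1 ζ)).trans ?_
    rw [lintegral_const_mul' _ _ (hA ▸ ENNReal.ofReal_ne_top), lintegral_add_left measurable_const]
    simp only [lintegral_const, measure_univ, mul_one]
    gcongr
    exact hC ζ
  refine (lintegral_mono h2).trans_lt ?_
  simp only [lintegral_const, measure_univ, mul_one]
  rw [hA, hB]
  exact ENNReal.mul_lt_top ENNReal.ofReal_lt_top
          (ENNReal.add_lt_top.2 ⟨ENNReal.ofReal_lt_top, ENNReal.ofReal_lt_top⟩)

lemma cauchy_L2h_aux {D K : Set ℂ} (hDb : Bornology.IsBounded D) (hK : IsCompact K)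
    (hKd : ∀ ζ ∈ K, ∀ ξ ∈ K, ‖ζ - ξ‖ ≤ 1) (μ : Measure K) [IsProbabilityMeasure μ]
    {C : ℝ} (hC : ∀ x : K, lpot μ x ≤ ENNReal.ofReal C) (g : C(K, ℂ)) :
    ∫⁻ z in D, (‖∫ ζ : K, g ζ * (z - (ζ : ℂ))⁻¹ ∂μ‖₊ : ℝ≥0∞) ^ 2 < ⊤ := by
  have : CompactSpace K := isCompact_iff_compactSpace.1 hK
  have h1 : ∀ z : ℂ, (‖∫ ζ : K, g ζ * (z - (ζ : ℂ))⁻¹ ∂μ‖₊ : ℝ≥0∞) ^ 2 ≤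
      ENNReal.ofReal ‖g‖ ^ 2 * (∫⁻ ζ : K, ‖z - (ζ : ℂ)‖ₑ⁻¹ ∂μ) ^ 2 := by
    intro z
    rw [← mul_pow]
    exact pow_le_pow_left' (cauchy_ptw μ g (fun ζ => g.norm_coe_le_norm ζ) z) 2
  refine (lintegral_mono h1).trans_lt ?_
  rw [lintegral_const_mul' _ _ (ENNReal.pow_ne_top ENNReal.ofReal_ne_top)]
  exact ENNReal.mul_lt_top (ENNReal.pow_lt_top ENNReal.ofReal_lt_top) (cauchy_L2h_aux1 hDb hK hKd μ hC)

lemma cauchy_L2h {D K : Set ℂ} (hDb : Bornology.IsBounded D) (hK : IsCompact K)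
    (hDK : Disjoint D K) (hKd : ∀ ζ ∈ K, ∀ ξ ∈ K, ‖ζ - ξ‖ ≤ 1) (μ : Measure K) [IsProbabilityMeasure μ]
    {C : ℝ} (hC : ∀ x : K, lpot μ x ≤ ENNReal.ofReal C) (g : C(K, ℂ)) :
    (fun z => ∫ ζ : K, g ζ * (z - (ζ : ℂ))⁻¹ ∂μ) ∈ L2h D :=
  ⟨fun z hz => (cauchy_hasDeriv hK μ g (disjoint_left.1 hDK hz)).differentiableAt.differentiableWithinAt,
    cauchy_L2h_aux hDb hK hKd μ hC g⟩


lemma bs_unif {X : Type*} [TopologicalSpace X] [CompactSpace X] [MeasurableSpace X] [BorelSpace X]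
    (μ : Measure X) [IsProbabilityMeasure μ] (k : ℕ → C(X, ℂ)) (hk : ∀ n x, k n x ≠ 0)
    (hb : ∀ g : C(X, ℂ), ∃ C : ℝ, ∀ n, ‖∫ x, g x * k n x ∂μ‖ ≤ C) :
    ∃ C : ℝ, ∀ n, ∫⁻ x, ‖k n x‖ₑ ∂μ ≤ ENNReal.ofReal C := by
  have hint : ∀ g : C(X, ℂ), Integrable (fun x => g x) μ := fun g =>
    Integrable.of_bound (g.continuous.measurable.aestronglyMeasurable) ‖g‖
      (Eventually.of_forall fun x => g.norm_coe_le_norm x)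
  let L : ℕ → C(X, ℂ) →L[ℂ] ℂ := fun n => LinearMap.mkContinuous
    { toFun := fun g => ∫ x, g x * k n x ∂μ
      map_add' := fun g h => by
        have := integral_add (hint (g * k n)) (hint (h * k n))
        simpa [add_mul] using this
      map_smul' := fun c g => by
        have := integral_const_mul (μ := μ) c (fun x => (g * k n) x)
        simpa [mul_assoc] using this } ‖k n‖ (fun g => by
      have := norm_integral_le_of_norm_le_const (μ := μ) (f := fun x => g x * k n x) (C := ‖k n‖ * ‖g‖)
        (Eventually.of_forall fun x => by
          rw [norm_mul, mul_comm]
          exact mul_le_mul ((k n).norm_coe_le_norm x) (g.norm_coe_le_norm x) (norm_nonneg _) (norm_nonneg _))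
      simpa using this)
  have hL : ∀ n g, L n g = ∫ x, g x * k n x ∂μ := fun n g => rfl
  obtain ⟨C, hC⟩ := banach_steinhaus (g := L) (fun g => by simpa only [hL] using hb g)
  refine ⟨C, fun n => ?_⟩
  let g : C(X, ℂ) := ⟨fun x => (starRingEnd ℂ) (k n x) * ((‖k n x‖ : ℂ))⁻¹, by
    apply Continuous.mul
    · exact Complex.continuous_conj.comp (k n).continuous
    · apply Continuous.inv₀
      · exact Complex.continuous_ofReal.comp (k n).continuous.norm
      · intro x; simpa using hk n x⟩
  have hg : ‖g‖ ≤ 1 := by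
    rw [ContinuousMap.norm_le _ zero_le_one]
    intro x
    have h0 : ‖k n x‖ ≠ 0 := norm_ne_zero_iff.2 (hk n x)
    show ‖(starRingEnd ℂ) (k n x) * ((‖k n x‖ : ℂ))⁻¹‖ ≤ 1
    rw [norm_mul, norm_inv, RCLike.norm_conj, Complex.norm_real, norm_norm, mul_inv_cancel₀ h0]
  have hgk : ∀ x, g x * k n x = ((‖k n x‖ : ℝ) : ℂ) := by
    intro x
    have h0 : (‖k n x‖ : ℂ) ≠ 0 := by simpa using hk n x
    show (starRingEnd ℂ) (k n x) * ((‖k n x‖ : ℂ))⁻¹ * k n x = _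
    rw [mul_right_comm, Complex.conj_mul', sq, mul_assoc, mul_inv_cancel₀ h0, mul_one]
  have h1 : ‖L n g‖ ≤ C := ((L n).le_opNorm g).trans
    ((mul_le_of_le_one_right (norm_nonneg _) hg).trans (hC n))
  rw [hL] at h1
  simp_rw [hgk] at h1
  rw [integral_complex_ofReal, Complex.norm_real] at h1
  have h2 := (le_abs_self _).trans h1
  simp_rw [← ofReal_norm]
  rw [← ofReal_integral_eq_lintegral_ofReal (hint (k n)).norm (Eventually.of_forall fun x => norm_nonneg _)]
  exact ENNReal.ofReal_le_ofReal h2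

lemma bs_point {K : Set ℂ} (hK : IsCompact K) (μ : Measure K) [IsProbabilityMeasure μ] {ζ0 : ℂ}
    {z : ℕ → ℂ} (hz : ∀ n, z n ∉ K) (hlim : Tendsto z atTop (𝓝 ζ0))
    (hb : ∀ g : C(K, ℂ), ∃ C : ℝ, ∀ n, ‖∫ ζ : K, g ζ * (-(((z n - (ζ : ℂ))⁻¹) ^ 2)) ∂μ‖ ≤ C) :
    ∫⁻ ζ : K, (‖ζ0 - (ζ : ℂ)‖ₑ⁻¹) ^ 2 ∂μ < ⊤ := by
  have : CompactSpace K := isCompact_iff_compactSpace.1 hK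
  have hne : ∀ n (ζ : K), z n - (ζ : ℂ) ≠ 0 := fun n ζ h => hz n ((sub_eq_zero.1 h) ▸ ζ.2)
  let k : ℕ → C(K, ℂ) := fun n => ⟨fun ζ => -(((z n - (ζ : ℂ))⁻¹) ^ 2), by
    apply Continuous.neg
    apply Continuous.pow
    apply Continuous.inv₀ (by fun_prop) (hne n)⟩
  obtain ⟨C, hC⟩ := bs_unif μ k (fun n x => neg_ne_zero.2 (pow_ne_zero _ (inv_ne_zero (hne n x)))) hb
  have hk : ∀ n (ζ : K), ‖k n ζ‖ₑ = (‖z n - (ζ : ℂ)‖ₑ⁻¹) ^ 2 := by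
    intro n ζ
    show ‖-(((z n - (ζ : ℂ))⁻¹) ^ 2)‖ₑ = _
    rw [enorm_neg, enorm_pow, enorm_inv (hne n ζ)]
  have hlim2 : ∀ ζ : K, liminf (fun n => ‖k n ζ‖ₑ) atTop = (‖ζ0 - (ζ : ℂ)‖ₑ⁻¹) ^ 2 := by
    intro ζ
    apply Tendsto.liminf_eq
    simp_rw [hk]
    apply ENNReal.Tendsto.pow
    apply Tendsto.inv
    exact (hlim.sub_const _).enorm
  simp_rw [← hlim2]
  refine (lintegral_liminf_le fun n => (k n).continuous.measurable.enorm).trans_lt ?_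
  refine lt_of_le_of_lt ?_ (ENNReal.ofReal_lt_top (r := C))
  calc _ ≤ liminf (fun _ : ℕ => ENNReal.ofReal C) atTop := liminf_le_liminf (Eventually.of_forall hC)
    _ = _ := liminf_const _

lemma density_contra {K : Set ℂ} (hK : IsCompact K) (μ : Measure K) [IsProbabilityMeasure μ]
    (h : ∀ ζ0 ∈ K, ∫⁻ ζ : K, (‖ζ0 - (ζ : ℂ)‖ₑ⁻¹) ^ 2 ∂μ < ⊤) : False := by
  set m : Measure ℂ := μ.map Subtype.val with hm
  have : IsProbabilityMeasure m := Measure.isProbabilityMeasure_map measurable_subtype_coe.aemeasurable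
  have h1 : ∀ᵐ x ∂m, x ∈ K := by
    refine (ae_map_iff (p := fun x => x ∈ K) measurable_subtype_coe.aemeasurable hK.isClosed.measurableSet).2 ?_
    exact Eventually.of_forall fun x => x.2
  obtain ⟨x, hxK, hx, hfin⟩ := (h1.and ((Besicovitch.ae_tendsto_rnDeriv volume m).and
    (Measure.rnDeriv_lt_top volume m))).exists
  set S : ℝ → Set K := fun s => Subtype.val ⁻¹' closedBall x s with hS
  have hmS : ∀ s, m (closedBall x s) = μ (S s) := fun s =>
    Measure.map_apply measurable_subtype_coe measurableSet_closedBall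
  set ε : ℝ → ℝ≥0∞ := fun s => ∫⁻ ζ in S s, (‖x - (ζ : ℂ)‖ₑ⁻¹) ^ 2 ∂μ with hε
  have hbd : ∀ s : ℝ, 0 < s → μ (S s) ≤ ENNReal.ofReal s ^ 2 * ε s := by
    intro s hs
    have hp : ENNReal.ofReal s ≠ 0 := by simpa using hs
    rw [hε, ← lintegral_const_mul' _ _ (ENNReal.pow_ne_top ENNReal.ofReal_ne_top)]
    rw [← setLIntegral_one]
    apply setLIntegral_mono' (measurable_subtype_coe measurableSet_closedBall)
    intro ζ hζ
    have h2 : ‖x - (ζ : ℂ)‖ₑ ≤ ENNReal.ofReal s := by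
      rw [← ofReal_norm, ← dist_eq_norm, dist_comm]
      exact ENNReal.ofReal_le_ofReal hζ
    rw [← mul_pow]
    calc (1 : ℝ≥0∞) = (ENNReal.ofReal s * (ENNReal.ofReal s)⁻¹) ^ 2 := by
          rw [ENNReal.mul_inv_cancel hp ENNReal.ofReal_ne_top, one_pow]
      _ ≤ _ := by gcongr
  have hI := h x hxK
  have hμ0 : Tendsto (μ ∘ S) (𝓝[>] 0) (𝓝 0) := by
    have h3 : Tendsto (fun s : ℝ => ENNReal.ofReal s ^ 2 * ∫⁻ ζ : K, (‖x - (ζ : ℂ)‖ₑ⁻¹) ^ 2 ∂μ) (𝓝[>] 0) (𝓝 0) := by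
      have h4 : Tendsto (fun s : ℝ => ENNReal.ofReal s ^ 2) (𝓝[>] 0) (𝓝 0) := by
        have h5 : Continuous fun s : ℝ => ENNReal.ofReal s ^ 2 :=
          (ENNReal.continuous_pow 2).comp ENNReal.continuous_ofReal
        have := (h5.tendsto 0).mono_left (nhdsWithin_le_nhds (s := Ioi 0))
        simpa using this
      have := ENNReal.Tendsto.mul_const (b := ∫⁻ ζ : K, (‖x - (ζ : ℂ)‖ₑ⁻¹) ^ 2 ∂μ) h4 (Or.inr hI.ne)
      simpa using this
    refine tendsto_of_tendsto_of_tendsto_of_le_of_le' tendsto_const_nhds h3 (Eventually.of_forall fun _ => zero_le) ?_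
    filter_upwards [self_mem_nhdsWithin] with s hs
    refine (hbd s hs).trans ?_
    gcongr
    exact setLIntegral_le_lintegral _ _
  have hε0 : Tendsto ε (𝓝[>] 0) (𝓝 0) := tendsto_setLIntegral_zero hI.ne hμ0
  obtain ⟨N, hN1, hN2⟩ := exists_between hfin
  have h6 : ∀ᶠ s in 𝓝[>] (0:ℝ), ENNReal.ofReal Real.pi ≤ N * ε s := by
    filter_upwards [self_mem_nhdsWithin, hx.eventually_lt_const hN1] with s hs hlt
    have hs' : (0:ℝ) < s := hs
    have hp : ENNReal.ofReal s ^ 2 ≠ 0 := pow_ne_zero _ (by simpa using hs')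
    have hv : (volume (closedBall x s) : ℝ≥0∞) = ENNReal.ofReal s ^ 2 * ENNReal.ofReal Real.pi := by
      rw [Complex.volume_closedBall]
      congr 1
      rw [← NNReal.coe_real_pi, ENNReal.ofReal_coe_nnreal]
    have hv0 : volume (closedBall x s) ≠ 0 := by
      rw [hv]; exact mul_ne_zero hp (by simp [Real.pi_pos])
    have hm0 : m (closedBall x s) ≠ 0 := by
      intro h0
      rw [h0, ENNReal.div_zero hv0] at hlt
      exact absurd hlt (by simp)
    have h7 : volume (closedBall x s) ≤ N * m (closedBall x s) :=
      (ENNReal.div_le_iff_le_mul (Or.inl hm0) (Or.inl (measure_ne_top _ _))).1 hlt.le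
    have h8 : ENNReal.ofReal s ^ 2 * ENNReal.ofReal Real.pi ≤ ENNReal.ofReal s ^ 2 * (N * ε s) := by
      rw [← hv]
      refine h7.trans ?_
      rw [hmS, mul_left_comm]
      gcongr
      exact hbd s hs'
    exact (ENNReal.mul_le_mul_iff_right hp (ENNReal.pow_ne_top ENNReal.ofReal_ne_top)).1 h8
  have h9 : Tendsto (fun s => N * ε s) (𝓝[>] 0) (𝓝 0) := by
    have := ENNReal.Tendsto.const_mul (a := N) hε0 (Or.inr hN2.ne)
    simpa using this
  have h10 := ge_of_tendsto h9 h6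
  simp only [nonpos_iff_eq_zero, ENNReal.ofReal_eq_zero] at h10
  exact absurd Real.pi_pos (not_lt.2 h10)


theorem backward {D : Set ℂ} (hopen : IsOpen D) (hbd : Bornology.IsBounded D)
    (H : ∀ w ∈ frontier D, ∀ U ∈ 𝓝 w, ¬ PolarSet (U \ D)) : IsL2hDomainOfHolomorphy D := by
  rintro ⟨D0, D1, hD0o, hD0c, hD1o, hD1c, hsub, hnot, hext⟩
  obtain ⟨p, hp⟩ := hD0c.nonempty
  have hsub' : D0 ⊆ D ∩ D1 := fun x hx => ⟨(hsub hx).2, (hsub hx).1⟩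
  set V := connectedComponentIn (D ∩ D1) p with hV
  have hVo : IsOpen V := (hopen.inter hD1o).connectedComponentIn
  have hVs : V ⊆ D ∩ D1 := connectedComponentIn_subset _ _
  have hVc : IsPreconnected V := isPreconnected_connectedComponentIn
  have hpV : p ∈ V := mem_connectedComponentIn (hsub' hp)
  obtain ⟨x1, hx1, hx1D⟩ := not_subset.1 hnot
  obtain ⟨w, hwD1, hwV⟩ : ∃ w ∈ D1, w ∈ frontier V := by
    by_contra hcon
    push Not at hcon
    obtain ⟨y, -, hy1, hy2⟩ := hD1c.isPreconnected V (closure V)ᶜ hVo isClosed_closure.isOpen_compl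
      (fun z hz => by
        by_cases h1 : z ∈ V
        · exact Or.inl h1
        · refine Or.inr fun h2 => hcon z hz ?_
          rw [hVo.frontier_eq]; exact ⟨h2, h1⟩)
      ⟨p, (hsub hp).1, hpV⟩ ⟨x1, hx1, fun h2 => hcon x1 hx1 (by
        rw [hVo.frontier_eq]; exact ⟨h2, fun h => hx1D (hVs h).1⟩)⟩
    exact hy2 (subset_closure hy1)
  have hfr : ∀ q ∈ frontier V, q ∈ D1 → q ∉ D := by
    intro q hq hq1 hqD
    have hqm : q ∈ connectedComponentIn (D ∩ D1) q := mem_connectedComponentIn ⟨hqD, hq1⟩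
    obtain ⟨y, hy1, hy2⟩ := mem_closure_iff.1 (frontier_subset_closure hq) _
      (hopen.inter hD1o).connectedComponentIn hqm
    have e1 := connectedComponentIn_eq hy1
    have e2 := connectedComponentIn_eq hy2
    rw [hVo.frontier_eq] at hq
    apply hq.2
    rw [hV, e2, ← e1]
    exact hqm
  obtain ⟨r0, hr0, hr0D⟩ := Metric.nhds_basis_closedBall.mem_iff.1 (hD1o.mem_nhds hwD1)
  obtain ⟨r, hrdef⟩ : ∃ r, r = min r0 (1 / 4) := ⟨_, rfl⟩
  have hr : 0 < r := hrdef ▸ lt_min hr0 (by norm_num)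
  have hr4 : r ≤ 1 / 4 := hrdef ▸ min_le_right _ _
  have hrD : closedBall w r ⊆ D1 := (closedBall_subset_closedBall (hrdef ▸ min_le_left _ _)).trans hr0D
  obtain ⟨K, hKdef⟩ : ∃ K, K = closedBall w r ∩ frontier V := ⟨_, rfl⟩
  have hK : IsCompact K := hKdef ▸ (isCompact_closedBall w r).inter_right isClosed_frontier
  have hwK : w ∈ K := hKdef ▸ ⟨mem_closedBall_self hr.le, hwV⟩
  have hKD1 : ∀ z ∈ K, z ∈ D1 := fun z hz => hrD (by rw [hKdef] at hz; exact hz.1)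
  have hKb : K ⊆ closedBall w r := by rw [hKdef]; exact inter_subset_left
  have hKV : K ⊆ frontier V := by rw [hKdef]; exact inter_subset_right
  have hKD : ∀ z ∈ K, z ∉ D := fun z hz => hfr z (hKV hz) (hKD1 z hz)
  rcases potential_dichotomy hK ⟨w, hwK⟩ with ⟨μ, hμ, C, hC⟩ | ⟨ν, hνp, hν⟩
  · apply density_contra hK μ
    intro ζ0 hζ0
    obtain ⟨z, hzV, hlim⟩ := mem_closure_iff_seq_limit.1 (frontier_subset_closure (hKV hζ0))
    have hzK : ∀ n, z n ∉ K := fun n h => hKD _ h (hVs (hzV n)).1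
    apply bs_point hK μ hzK hlim
    intro g
    have hL := cauchy_L2h hbd hK (disjoint_left.2 fun z hz hzK => hKD z hzK hz) (fun ζ hζ ξ hξ => by
      have h1 := hKb hζ
      have h2 := hKb hξ
      rw [mem_closedBall] at h1 h2
      rw [← dist_eq_norm]
      have := dist_triangle_right ζ ξ w
      linarith) μ hC g
    obtain ⟨F, hF, hFe⟩ := hext _ hL
    have hFV : EqOn F (fun z => ∫ ζ : K, g ζ * (z - (ζ : ℂ))⁻¹ ∂μ) V := by
      exact AnalyticOnNhd.eqOn_of_preconnected_of_eventuallyEq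
        ((hF.mono fun x hx => (hVs hx).2).analyticOnNhd hVo)
        ((hL.1.mono fun x hx => (hVs hx).1).analyticOnNhd hVo) hVc hpV
        (hFe.eventuallyEq_of_mem (hD0o.mem_nhds hp))
    have hder : ∀ n, deriv F (z n) = ∫ ζ : K, g ζ * (-(((z n - (ζ : ℂ))⁻¹) ^ 2)) ∂μ := by
      intro n
      rw [(hFV.eventuallyEq_of_mem (hVo.mem_nhds (hzV n))).deriv_eq]
      exact (cauchy_hasDeriv hK μ g (hzK n)).deriv
    have hcont : ContinuousAt (deriv F) ζ0 :=
      ((hF.deriv hD1o).differentiableAt (hD1o.mem_nhds (hKD1 ζ0 hζ0))).continuousAt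
    obtain ⟨M, hM⟩ := ((hcont.tendsto.comp hlim).norm).bddAbove_range
    refine ⟨M, fun n => ?_⟩
    rw [← hder]
    exact hM ⟨n, rfl⟩
  · have hre := re_null ν hν
    have him := im_null ν hν
    obtain ⟨B, hB⟩ : ∃ B, B = Ioo (w.re - r / 4) (w.re + r / 4) ×ℂ Ioo (w.im - r / 4) (w.im + r / 4) := ⟨_, rfl⟩
    have hBo : IsOpen B := hB ▸ isOpen_Ioo.reProdIm isOpen_Ioo
    have hwB : w ∈ B := by
      rw [hB]
      exact ⟨⟨by linarith, by linarith⟩, by linarith, by linarith⟩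
    have hBb : B ⊆ closedBall w (r / 2) := by
      rw [hB]
      rintro z ⟨⟨h1, h2⟩, h3, h4⟩
      rw [mem_closedBall, dist_eq_norm]
      have h5 := Complex.norm_le_abs_re_add_abs_im (z - w)
      have h6 : |(z - w).re| ≤ r / 4 := by
        rw [Complex.sub_re, abs_le]; constructor <;> linarith
      have h7 : |(z - w).im| ≤ r / 4 := by
        rw [Complex.sub_im, abs_le]; constructor <;> linarith
      linarith
    have hBK : ∀ z ∈ B, z ∈ frontier V → z ∈ K := fun z hz hzf => by
      rw [hKdef]; exact ⟨closedBall_subset_closedBall (by linarith) (hBb hz), hzf⟩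
    have hBcl : ∀ z ∈ B, z ∈ closure V := by
      intro q hq
      by_contra hqV
      refine box_not_separated hre him hVo isClosed_closure.isOpen_compl
        (disjoint_compl_right.mono_left subset_closure)
        (a := w.re - r / 4) (b := w.re + r / 4) (c := w.im - r / 4) (d := w.im + r / 4) ?_ ?_ ?_
      · rw [← hB]
        intro z hz
        by_cases h1 : z ∈ V
        · exact Or.inl (Or.inl h1)
        · by_cases h2 : z ∈ closure V
          · exact Or.inr (hBK z hz (by rw [hVo.frontier_eq]; exact ⟨h2, h1⟩))
          · exact Or.inl (Or.inr h2)
      · rw [← hB]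
        exact mem_closure_iff.1 (frontier_subset_closure hwV) B hBo hwB
      · rw [← hB]
        exact ⟨q, hq, hqV⟩
    have hBD : ∀ z ∈ B \ D, z ∈ K := by
      rintro z ⟨hz, hzD⟩
      apply hBK z hz
      rw [hVo.frontier_eq]
      exact ⟨hBcl z hz, fun h => hzD (hVs h).1⟩
    have hwfr : w ∈ frontier D := by
      rw [hopen.frontier_eq]
      exact ⟨closure_mono (fun x hx => (hVs hx).1) (frontier_subset_closure hwV), hKD w hwK⟩
    apply H w hwfr B (hBo.mem_nhds hwB)
    intro z hz
    refine ⟨ball w (1 / 4), isOpen_ball, isConnected_ball (by norm_num), ?_, _,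
      neg_lpot_subharmonic ν w (hKb.trans (closedBall_subset_closedBall hr4)), ?_, ?_⟩
    · have := hBb hz.1
      rw [mem_closedBall] at this
      rw [mem_ball]
      linarith
    · obtain ⟨x, hxb, hxV⟩ := mem_closure_iff.1 (frontier_subset_closure hwV) (ball w (1 / 4)) isOpen_ball
        (mem_ball_self (by norm_num))
      refine ⟨x, hxb, ?_⟩
      have := lpot_lt_top_off hK ν (fun h => hKD x h (hVs hxV).1)
      simp only [ne_eq, EReal.neg_eq_bot_iff, EReal.coe_ennreal_eq_top_iff]
      exact this.ne
    · intro x hx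
      have := hν ⟨x, hBD x hx.1⟩
      simp only at this
      simp [this]

/-- **Theorem 4.** A bounded domain `D ⊆ ℂ` is an `L²ₕ`-domain of holomorphy iff for every
`w ∈ ∂D` and every neighborhood `U` of `w` the set `U \ D` is not polar. -/
theorem l2h_domain_iff_not_polar (D : Set ℂ)
    (hopen : IsOpen D) (hconn : IsConnected D) (hbd : Bornology.IsBounded D) :
    IsL2hDomainOfHolomorphy D ↔
      ∀ w ∈ frontier D, ∀ U ∈ 𝓝 w, ¬ PolarSet (U \ D) := by
  exact ⟨forward hopen, backward hopen hbd⟩
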